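/- Let a, b, c be rational numbers with a·b·c ≠ 0, let (w,x,y,z) = Ĝ(1,a,b,c) and (w₂,x₂,y₂,z₂) = Ĝ(w,x,y,z), where Ĝ(w,x,y,z) = (w³+2x³+y³, w²x+2x²y+y²z, wx²+2xy²+yz², x³+2y³+z³). Suppose condition R(a,b,c) holds, condition T(w,x,y,z) holds, and condition T(w₂,x₂,y₂,z₂) holds. Then (a,b,c) = (−1, 1, 1), or (a,b,c) = (1, −1, 1), or (b = −a and c = −1). -/

import Mathlib

/-- Condition R: the gadget `G₁` fails to work on `[1,a,b,c]`. -/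
def condR (a b c : ℚ) : Prop :=
  c + 1 = 0 ∨
  a * b + c ^ 2 + c + 1 = 0 ∨
  2 * a * b + c ^ 2 + 1 = 0 ∨
  3 * a * b + c ^ 2 - c + 1 = 0 ∨
  4 * a * b + c ^ 2 - 2 * c + 1 = 0

/-- Condition S: the normalized signature `[w,x,y,z]` is degenerate,
generalized equality, or affine. -/
def condS (w x y z : ℚ) : Prop :=
  (x ^ 2 = w * y ∧ y ^ 2 = x * z) ∨
  (x = 0 ∧ y = 0) ∨
  (w = y ∧ x = 0 ∧ z = 0) ∨
  (w + y = 0 ∧ x = 0 ∧ z = 0) ∨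
  (w = x ∧ w + y = 0 ∧ w + z = 0) ∨
  (w + x = 0 ∧ w + y = 0 ∧ w = z)

/-- Condition T: the gadget `G₁` fails to work on the normalized signature `[w,x,y,z]`. -/
def condT (w x y z : ℚ) : Prop :=
  z * w + w ^ 2 = 0 ∨
  x * y + z ^ 2 + z * w + w ^ 2 = 0 ∨
  2 * x * y + z ^ 2 + w ^ 2 = 0 ∨
  3 * x * y + z ^ 2 - z * w + w ^ 2 = 0 ∨
  4 * x * y + z ^ 2 - 2 * z * w + w ^ 2 = 0 ∨
  x * y = w * z

/-- The signature produced by the auxiliary gadget `G_aux` from `[w,x,y,z]`. -/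
def Ghat (p : ℚ × ℚ × ℚ × ℚ) : ℚ × ℚ × ℚ × ℚ :=
  (p.1 ^ 3 + 2 * p.2.1 ^ 3 + p.2.2.1 ^ 3,
   p.1 ^ 2 * p.2.1 + 2 * p.2.1 ^ 2 * p.2.2.1 + p.2.2.1 ^ 2 * p.2.2.2,
   p.1 * p.2.1 ^ 2 + 2 * p.2.1 * p.2.2.1 ^ 2 + p.2.2.1 * p.2.2.2 ^ 2,
   p.2.1 ^ 3 + 2 * p.2.2.1 ^ 3 + p.2.2.2 ^ 3)

/-!
The three conditions are homogeneous equations in `[w, x, y, z] = [1, a, b, c]`, one choice of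
failure types `i, j, k` at a time. If `i` and `j` are both the type `w + z = 0`, the equations say
`c = -1` and `b³ = -a³`. Otherwise a solution is studied over `ℤ_[l]` for a small prime `l`
depending on `i, j, k`, chosen such that an exhaustive search over `𝔽_l` finds as residues of
solutions only reductions of known solutions and points of the lines `[1, a, b, -1]`, `b³ = -a³`,
which multiplying `a` and `b` by inverse cube roots of unity turns into `[1, 1, -1, -1]` or
`[1, -1, 1, -1]`. It remains to study the solutions `l`-adically close to such a residue. At an
isolated solution the linearised equations, or failing that the quadratic ones, leave only the
scalar direction. Near the lines, the leading terms of the iterated gadget in coordinates adapted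
to the line cannot all vanish unless the solution lies on the line. Near the identity `[1, 0, 0, 1]`
a blow-up shows that `x` or `y` vanishes.
-/

namespace TernaryGadget

/-- The index of one of the seven ways in which the gadget `G₁` can fail. For the matrix
`M = [[w, x], [y, z]]`, index `0` stands for `w = 0`, index `6` for `det M = 0`, and index
`1 ≤ j ≤ 5` for `(tr M)² = (j - 1) det M`, that is, the ratio of the eigenvalues is a root of unity
of order `2, 3, 4, 6, 1` respectively. -/
abbrev FailureType := Fin 7

/-- The coefficient of `(tr M)²` in the failure polynomials of positive index. -/
def traceCoeff : FailureType → ℕ := ![1, 1, 1, 1, 1, 1, 0]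

/-- The coefficient of `- det M` in the failure polynomials of positive index. -/
def detCoeff : FailureType → ℕ := ![0, 0, 1, 2, 3, 4, 1]

/-- The symmetric ternary signature `[w, x, y, z]`, or a multiple of it. -/
@[ext]
structure Signature (A : Type*) where
  w : A
  x : A
  y : A
  z : A

namespace Signature

variable {A B : Type*} [CommRing A] [CommRing B]

/-- The signature produced by the auxiliary gadget, over an arbitrary ring. -/
@[simps]
def gadget (v : Signature A) : Signature A where
  w := v.w ^ 3 + 2 * v.x ^ 3 + v.y ^ 3
  x := v.w ^ 2 * v.x + 2 * v.x ^ 2 * v.y + v.y ^ 2 * v.z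
  y := v.w * v.x ^ 2 + 2 * v.x * v.y ^ 2 + v.y * v.z ^ 2
  z := v.x ^ 3 + 2 * v.y ^ 3 + v.z ^ 3

/-- The polynomial whose vanishing is the failure of `G₁` of type `j`. In the normalized case
`w = 0` takes the place of the paper's `w (w + z) = 0`, whose other factor has type `1`. -/
def failure (j : FailureType) (v : Signature A) : A :=
  if j = 0 then v.w
  else traceCoeff j * (v.w + v.z) ^ 2 + detCoeff j * (v.x * v.y - v.w * v.z)

/-- `G₁` fails with type `i` on `v`, with type `j` on `Ĝ v` and with type `k` on `Ĝ (Ĝ v)`. -/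
def Solves (i j k : FailureType) (v : Signature A) : Prop :=
  v.failure i = 0 ∧ v.gadget.failure j = 0 ∧ v.gadget.gadget.failure k = 0

/-- The image of a signature under a ring homomorphism. -/
@[simps]
def map {A B : Type*} [CommSemiring A] [CommSemiring B] (φ : A →+* B) (v : Signature A) :
    Signature B := ⟨φ v.w, φ v.x, φ v.y, φ v.z⟩

/-- The multiple `g • v` of a signature. -/
@[simps]
def scale (g : A) (v : Signature A) : Signature A := ⟨g * v.w, g * v.x, g * v.y, g * v.z⟩

theorem gadget_map (φ : A →+* B) (v : Signature A) : (v.map φ).gadget = v.gadget.map φ := by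
  ext <;> simp [map_ofNat φ]

theorem failure_map (φ : A →+* B) (j : FailureType) (v : Signature A) :
    (v.map φ).failure j = φ (v.failure j) := by
  simp [failure, apply_ite φ]

theorem Solves.map {i j k : FailureType} {v : Signature A} (h : v.Solves i j k) (φ : A →+* B) :
    (v.map φ).Solves i j k := by
  simp only [Solves, gadget_map, failure_map, h.1, h.2.1, h.2.2, map_zero, and_self]

theorem Solves.of_map {i j k : FailureType} {v : Signature A} {φ : A →+* B}
    (hφ : Function.Injective φ) (h : (v.map φ).Solves i j k) : v.Solves i j k := by
  simpa only [Solves, gadget_map, failure_map, map_eq_zero_iff φ hφ] using h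

theorem gadget_scale (g : A) (v : Signature A) :
    (v.scale g).gadget = v.gadget.scale (g ^ 3) := by
  ext <;> simp <;> ring

theorem failure_scale (j : FailureType) (g : A) (v : Signature A) :
    (v.scale g).failure j = g ^ (if j = 0 then 1 else 2) * v.failure j := by
  unfold failure
  split_ifs <;> simp
  ring

theorem Solves.scale {i j k : FailureType} {v : Signature A} (h : v.Solves i j k) (g : A) :
    (v.scale g).Solves i j k := by
  simp only [Solves, gadget_scale, failure_scale, h.1, h.2.1, h.2.2, mul_zero, and_self]

theorem Solves.of_scale [IsDomain A] {i j k : FailureType} {g : A} {v : Signature A} (hg : g ≠ 0)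
    (h : (v.scale g).Solves i j k) : v.Solves i j k := by
  simpa only [Solves, gadget_scale, failure_scale, mul_eq_zero, pow_eq_zero_iff', hg, ne_eq,
    false_and, false_or] using h

end Signature

/-- Coordinates `(p : q : r : s)` in which the invariant curve `[1, a, -a, -1]` is the line
`p = r = 0`; see `Signature.rotate`. -/
@[ext]
structure Rotated (A : Type*) where
  p : A
  q : A
  r : A
  s : A

namespace Rotated

variable {A B : Type*} [CommRing A] [CommRing B]

/-- The map of the auxiliary gadget in rotated coordinates. For `ρ = 1` it is `Ĝ` divided by `16`;
in general it is the conjugate of this map by `weight ρ`, divided by `ρ²`, and `ρ = 0` gives its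
initial form for the weights `3, 2, 1, 0` of `p, q, r, s`. -/
@[simps]
def gadget (ρ : A) (v : Rotated A) : Rotated A where
  p := 3 * v.p * v.r ^ 2 + 6 * v.q ^ 2 * v.r + ρ ^ 2 * (6 * v.p * v.q ^ 2) + ρ ^ 4 * v.p ^ 3
  q := 5 * v.q * v.r ^ 2 + 2 * v.q ^ 2 * v.s + 2 * v.p * v.r * v.s
    + ρ ^ 2 * (2 * v.q ^ 3 + 4 * v.p * v.q * v.r) + ρ ^ 4 * (v.p ^ 2 * v.q)
  r := 2 * v.r ^ 3 + 6 * v.q * v.r * v.s + v.p * v.s ^ 2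
    + ρ ^ 2 * (4 * v.q ^ 2 * v.r + 2 * v.p * v.r ^ 2) + ρ ^ 4 * (v.p * v.q ^ 2)
  s := 6 * v.r ^ 2 * v.s + 3 * v.q * v.s ^ 2 + ρ ^ 2 * (6 * v.q * v.r ^ 2) + ρ ^ 4 * v.q ^ 3

/-- The failure polynomials in rotated coordinates, weighted like `gadget`. -/
def failure (j : FailureType) (ρ : A) (v : Rotated A) : A :=
  if j = 0 then ρ ^ 3 * v.p + 3 * ρ ^ 2 * v.q + 3 * ρ * v.r + v.s
  else traceCoeff j * (ρ ^ 2 * v.p + 3 * v.r) ^ 2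
    + 2 * detCoeff j * (v.q * v.s + ρ ^ 2 * v.q ^ 2 - v.r ^ 2 - ρ ^ 2 * v.p * v.r)

/-- The analogue of `Signature.Solves` in weighted rotated coordinates. -/
def Solves (i j k : FailureType) (ρ : A) (v : Rotated A) : Prop :=
  v.failure i ρ = 0 ∧ (v.gadget ρ).failure j ρ = 0 ∧ ((v.gadget ρ).gadget ρ).failure k ρ = 0

/-- The image of a point under a ring homomorphism. -/
@[simps]
def map {A B : Type*} [CommSemiring A] [CommSemiring B] (φ : A →+* B) (v : Rotated A) :
    Rotated B := ⟨φ v.p, φ v.q, φ v.r, φ v.s⟩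

/-- The multiple `g • v` of a point. -/
@[simps]
def scale (g : A) (v : Rotated A) : Rotated A := ⟨g * v.p, g * v.q, g * v.r, g * v.s⟩

/-- The action of `ρ` with weights `3, 2, 1, 0`. -/
@[simps]
def weight (ρ : A) (v : Rotated A) : Rotated A := ⟨ρ ^ 3 * v.p, ρ ^ 2 * v.q, ρ * v.r, v.s⟩

theorem failure_of_ne_zero {j : FailureType} (hj : j ≠ 0) (ρ : A) (v : Rotated A) :
    v.failure j ρ = traceCoeff j * (ρ ^ 2 * v.p + 3 * v.r) ^ 2
      + 2 * detCoeff j * (v.q * v.s + ρ ^ 2 * v.q ^ 2 - v.r ^ 2 - ρ ^ 2 * v.p * v.r) :=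
  if_neg hj

theorem gadget_map (φ : A →+* B) (ρ : A) (v : Rotated A) :
    (v.map φ).gadget (φ ρ) = (v.gadget ρ).map φ := by
  ext <;> simp [map_ofNat φ]

theorem failure_map (φ : A →+* B) (j : FailureType) (ρ : A) (v : Rotated A) :
    (v.map φ).failure j (φ ρ) = φ (v.failure j ρ) := by
  simp [failure, apply_ite φ, map_ofNat φ]

theorem Solves.map {i j k : FailureType} {ρ : A} {v : Rotated A} (h : v.Solves i j k ρ)
    (φ : A →+* B) : (v.map φ).Solves i j k (φ ρ) := by
  simp only [Solves, gadget_map, failure_map, h.1, h.2.1, h.2.2, map_zero, and_self]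

theorem gadget_scale (ρ g : A) (v : Rotated A) :
    (v.scale g).gadget ρ = (v.gadget ρ).scale (g ^ 3) := by
  ext <;> simp <;> ring

theorem failure_scale (j : FailureType) (ρ g : A) (v : Rotated A) :
    (v.scale g).failure j ρ = g ^ (if j = 0 then 1 else 2) * v.failure j ρ := by
  unfold failure
  split_ifs <;> simp <;> ring

theorem failure_scale_eq_zero_iff [IsDomain A] (j : FailureType) (ρ : A) {g : A} (hg : g ≠ 0)
    (v : Rotated A) : (v.scale g).failure j ρ = 0 ↔ v.failure j ρ = 0 := by
  rw [failure_scale, mul_eq_zero, or_iff_right (pow_ne_zero _ hg)]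

theorem gadget_weight (ρ : A) (v : Rotated A) :
    (v.weight ρ).gadget 1 = ((v.gadget ρ).weight ρ).scale (ρ ^ 2) := by
  ext <;> simp <;> ring

theorem failure_weight (j : FailureType) (ρ : A) (v : Rotated A) :
    (v.weight ρ).failure j 1 = ρ ^ (if j = 0 then 0 else 2) * v.failure j ρ := by
  unfold failure
  split_ifs <;> simp <;> ring

theorem Solves.of_weight [IsDomain A] {i j k : FailureType} {ρ : A} {v : Rotated A} (hρ : ρ ≠ 0)
    (h : (v.weight ρ).Solves i j k 1) : v.Solves i j k ρ := by
  simpa only [Solves, gadget_weight, gadget_scale, failure_scale, failure_weight, mul_eq_zero,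
    pow_eq_zero_iff', hρ, ne_eq, false_and, false_or] using h

end Rotated

section ResidueField

variable {F : Type*} [Field F]

theorem ofNat_ne_zero (hF : (210 : F) ≠ 0) (n : ℕ) [n.AtLeastTwo]
    (hn : n ∣ 210 ^ 5 := by norm_num) : (OfNat.ofNat n : F) ≠ 0 := by
  intro h0
  obtain ⟨m, hm⟩ := hn
  apply pow_ne_zero 5 hF
  calc (210 : F) ^ 5 = ((210 ^ 5 : ℕ) : F) := by norm_cast
    _ = 0 := by
      rw [hm, Nat.cast_mul, show (n : F) = OfNat.ofNat n from Nat.cast_ofNat, h0, zero_mul]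

theorem detCoeff_ne_zero (hF : (210 : F) ≠ 0) {j : FailureType} (hj0 : j ≠ 0) (hj1 : j ≠ 1) :
    (detCoeff j : F) ≠ 0 := by
  have h2 := ofNat_ne_zero hF 2
  have h3 := ofNat_ne_zero hF 3
  have h4 := ofNat_ne_zero hF 4
  fin_cases j <;> simp_all [detCoeff]

theorem nine_mul_traceCoeff_sub_ne_zero (hF : (210 : F) ≠ 0) {j : FailureType} (hj : j ≠ 0) :
    (9 * traceCoeff j - 2 * detCoeff j : F) ≠ 0 := by
  have h2 := ofNat_ne_zero hF 2
  have h3 := ofNat_ne_zero hF 3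
  have h5 := ofNat_ne_zero hF 5
  have h7 := ofNat_ne_zero hF 7
  have h9 := ofNat_ne_zero hF 9
  fin_cases j <;> first | exact absurd rfl hj | norm_num [traceCoeff, detCoeff, h2, h3, h5, h7, h9]

end ResidueField

theorem traceCoeff_eq_one {j : FailureType} (hj : j ≠ 6) : traceCoeff j = 1 := by
  fin_cases j <;> simp_all [traceCoeff]

namespace Rotated

section BasePoint

variable {R F : Type*} [CommRing R] [Field F]

theorem failure_gadget_ne_zero (hF : (210 : F) ≠ 0) (k : FailureType) {v : Rotated F}
    (hp : v.p = 0) (hq : v.q = 0) (hr : v.r ≠ 0) (h0 : v.failure 0 1 = 0) :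
    (v.gadget 1).failure k 1 ≠ 0 := by
  have hs : v.s = -3 * v.r := by
    simp only [failure, if_pos, hp, hq] at h0
    linear_combination h0
  by_cases hk : k = 0
  · have : (v.gadget 1).failure k 1 = -12 * v.r ^ 3 := by
      simp only [hk, failure, if_pos, gadget, hp, hq, hs]; ring
    simpa [this] using ⟨ofNat_ne_zero hF 12, hr⟩
  · have : (v.gadget 1).failure k 1 = 4 * v.r ^ 6 * (9 * traceCoeff k - 2 * detCoeff k) := by
      rw [failure_of_ne_zero hk]
      simp only [gadget, hp, hq, hs]; ring
    rw [this]
    exact mul_ne_zero (mul_ne_zero (ofNat_ne_zero hF 4) (pow_ne_zero _ hr))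
      (nine_mul_traceCoeff_sub_ne_zero hF hk)

theorem not_solves_of_gadget_eq_scale [IsDomain R] {φ : R →+* F} (hF : (210 : F) ≠ 0)
    {i k : FailureType} {g : R} {v v' : Rotated R} (hg : g ≠ 0) (hv' : v.gadget 1 = v'.scale g)
    (hp : φ v'.p = 0) (hq : φ v'.q = 0) (hr : φ v'.r ≠ 0) : ¬ v.Solves i 0 k 1 := by
  rintro ⟨-, h0, hk⟩
  rw [hv', failure_scale_eq_zero_iff _ _ hg] at h0
  rw [hv', gadget_scale, failure_scale_eq_zero_iff _ _ (pow_ne_zero _ hg)] at hk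
  refine failure_gadget_ne_zero hF k (v := v'.map φ) hp hq hr ?_ ?_
  · rw [← map_one φ, failure_map, h0, map_zero]
  · rw [← map_one φ, gadget_map, failure_map, hk, map_zero]

end BasePoint

/-! ### Near `(0 : 0 : 0 : 1)`, when `p` divides `r³` strictly -/

section CubeSmall

variable {R F : Type*} [CommRing R] [Field F] {φ : R →+* F}

theorem exists_q_eq_of_cube_small [IsLocalHom φ] {n : ℕ} (hn : (2 * n : F) ≠ 0) {p q r : R}
    (hp : φ p = 0) (hq : φ q = 0) (hr : φ r = 0)
    (h : (p + 3 * r) ^ 2 + 2 * (n : R) * (q + q ^ 2 - r ^ 2 - p * r) = 0) :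
    ∃ a y, φ y = 0 ∧ q = r ^ 2 * a + p * y := by
  obtain ⟨u, hu⟩ := (isUnit_of_map_unit φ (2 * (n : R) * (1 + q))
    (by simpa [hq, map_ofNat φ] using hn)).exists_right_inv
  refine ⟨(2 * n - 9) * u, r * ((2 * n - 6) * u) - p * u, by simp [hp, hr], ?_⟩
  linear_combination (-q) * hu + u * h

theorem exists_gadget_p_eq {p q r m a y : R} (hp : φ p = 0) (hq : φ q = 0) (hr : φ r = 0)
    (hm : r ^ 3 = p * m) (hqa : q = r ^ 2 * a + p * y) :
    ∃ π, φ π = 0 ∧ (gadget 1 ⟨p, q, r, 1⟩).p = p * π := by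
  refine ⟨p ^ 2 + 3 * r ^ 2 + 6 * q ^ 2 + 6 * (m * a * q + q * r * y), by simp [hp, hq, hr], ?_⟩
  simp only [gadget_p]
  linear_combination 6 * q * r * hqa + 6 * a * q * hm

theorem exists_gadget_q_eq {p q r m a y : R} (hm : r ^ 3 = p * m) (hqa : q = r ^ 2 * a + p * y) :
    ∃ b c, (gadget 1 ⟨p, q, r, 1⟩).q = p * (r * b + p * c) := by
  refine ⟨5 * (m * a + y * r) + 2 * (1 + q) * (m * a ^ 2 + 2 * r * a * y) + 2 + 4 * q,
    2 * (1 + q) * y ^ 2 + q, ?_⟩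
  simp only [gadget_q]
  linear_combination (5 * r ^ 2 + 2 * (1 + q) * (q + r ^ 2 * a + p * y)) * hqa +
    (5 * r * a + 2 * (1 + q) * r * a ^ 2) * hm

theorem exists_gadget_r_eq {p q r m a y : R} (hq : φ q = 0) (hr : φ r = 0) (hm0 : φ m = 0)
    (hm : r ^ 3 = p * m) (hqa : q = r ^ 2 * a + p * y) :
    ∃ ρ, φ ρ = 1 ∧ (gadget 1 ⟨p, q, r, 1⟩).r = p * ρ := by
  refine ⟨1 + 2 * m + (6 + 4 * q) * (m * a + y * r) + 2 * r ^ 2 + q ^ 2, by simp [hq, hr, hm0], ?_⟩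
  simp only [gadget_r]
  linear_combination (6 + 4 * q) * r * hqa + (2 + (6 + 4 * q) * a) * hm

theorem exists_gadget_s_eq {p q r a y : R} (hq : φ q = 0) (hy : φ y = 0)
    (hqa : q = r ^ 2 * a + p * y) :
    ∃ b c, φ c = 0 ∧ (gadget 1 ⟨p, q, r, 1⟩).s = r ^ 2 * b + p * c := by
  refine ⟨6 + 3 * a + 6 * q + q ^ 2 * a, 3 * y + q ^ 2 * y, by simp [hq, hy], ?_⟩
  simp only [gadget_s]
  linear_combination (3 + q ^ 2) * hqa

theorem not_solves_of_cube_small [IsDomain R] [IsLocalHom φ] (hF : (210 : F) ≠ 0)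
    {i j k : FailureType} (hi0 : i ≠ 0) (hi1 : i ≠ 1) (hi6 : i ≠ 6) {p q r m : R}
    (hp0 : p ≠ 0) (hp : φ p = 0) (hq : φ q = 0) (hr : φ r = 0) (hm0 : φ m = 0)
    (hm : r ^ 3 = p * m) : ¬ Solves i j k 1 ⟨p, q, r, 1⟩ := by
  intro hsol
  obtain ⟨hi, hj, -⟩ := id hsol
  obtain ⟨a, y, hy, hqa⟩ := exists_q_eq_of_cube_small (n := detCoeff i)
    (mul_ne_zero (ofNat_ne_zero hF 2) (detCoeff_ne_zero hF hi0 hi1)) hp hq hr (by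
      simp only [failure_of_ne_zero hi0, traceCoeff_eq_one hi6] at hi
      linear_combination hi)
  obtain ⟨π, hπ, gp⟩ := exists_gadget_p_eq hp hq hr hm hqa
  obtain ⟨b, c, gq⟩ := exists_gadget_q_eq hm hqa
  obtain ⟨ρ, hρ, gr⟩ := exists_gadget_r_eq hq hr hm0 hm hqa
  obtain ⟨d, e, he, gs⟩ := exists_gadget_s_eq hq hy hqa
  by_cases hj0 : j = 0
  · subst hj0
    have hs : (gadget 1 ⟨p, q, r, 1⟩).s = p * -(π + 3 * (r * b + p * c) + 3 * ρ) := by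
      simp only [failure, if_pos] at hj
      linear_combination hj - gp - 3 * gq - 3 * gr
    exact not_solves_of_gadget_eq_scale hF hp0 (v' := ⟨_, _, _, _⟩) (Rotated.ext gp gq gr hs)
      hπ (by simp [hp, hr]) (by simp [hρ]) hsol
  · have : p ^ 2 * (traceCoeff j * (π + 3 * ρ) ^ 2
        + 2 * detCoeff j * (m * b * d + r * b * e + c * (r ^ 2 * d + p * e)
          + (r * b + p * c) ^ 2 - ρ ^ 2 - π * ρ)) = 0 := by
      rw [failure_of_ne_zero hj0, gp, gq, gr, gs] at hj
      linear_combination hj - 2 * detCoeff j * p * b * d * hm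
    have residue : (traceCoeff j * 3 ^ 2 + -(2 * detCoeff j) : F) = 0 := by
      simpa [hπ, hρ, hm0, hp, hr, map_ofNat φ] using
        congrArg φ ((mul_eq_zero.1 this).resolve_left (pow_ne_zero _ hp0))
    exact nine_mul_traceCoeff_sub_ne_zero hF hj0 (by linear_combination residue)

end CubeSmall

/-! ### Near `(0 : 0 : 0 : 1)`, when `r³` divides `p` -/

section Exceptional

variable {R F : Type*} [CommRing R] [Field F] {φ : R →+* F}

theorem two_mul_map_q_eq (hF : (210 : F) ≠ 0) {ρ P Q : R} (hρ : φ ρ = 0)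
    (h : failure 4 ρ ⟨P, Q, 1, 1⟩ = 0) : 2 * φ Q = -1 := by
  have h0 : 3 ^ 2 + 2 * 3 * (φ Q - 1) = 0 := by
    simpa [failure, traceCoeff, detCoeff, hρ, map_ofNat φ] using congrArg φ h
  exact mul_left_cancel₀ (ofNat_ne_zero hF 3) (by linear_combination h0)

theorem exists_gadget_q_eq_two_mul_r_add [IsLocalHom φ] (hF : (210 : F) ≠ 0) {ρ P Q : R}
    (h : failure 4 ρ ⟨P, Q, 1, 1⟩ = 0) :
    ∃ y, (gadget ρ ⟨P, Q, 1, 1⟩).q = 2 * (gadget ρ ⟨P, Q, 1, 1⟩).r + ρ ^ 2 * y := by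
  obtain ⟨u, hu⟩ := (isUnit_of_map_unit φ 3
    (by simpa [map_ofNat φ] using ofNat_ne_zero hF 3)).exists_right_inv
  have h' : 6 * Q + 3 + 6 * ρ ^ 2 * Q ^ 2 + ρ ^ 4 * P ^ 2 = 0 := by
    simp only [failure_of_ne_zero (by decide : (4 : FailureType) ≠ 0), traceCoeff, detCoeff] at h
    push_cast at h
    linear_combination h
  have factored : (gadget ρ ⟨P, Q, 1, 1⟩).q - 2 * (gadget ρ ⟨P, Q, 1, 1⟩).r
      = (2 * Q + 1) * (Q - 4)
        + ρ ^ 2 * (2 * Q ^ 3 + 4 * P * Q + ρ ^ 2 * (P ^ 2 * Q)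
          - 2 * (4 * Q ^ 2 + 2 * P + ρ ^ 2 * (P * Q ^ 2))) := by
    simp only [gadget_q, gadget_r]; ring
  refine ⟨2 * Q ^ 3 + 4 * P * Q + ρ ^ 2 * (P ^ 2 * Q)
    - 2 * (4 * Q ^ 2 + 2 * P + ρ ^ 2 * (P * Q ^ 2)) - u * (6 * Q ^ 2 + ρ ^ 2 * P ^ 2) * (Q - 4), ?_⟩
  linear_combination factored + (Q - 4) * u * h' - (Q - 4) * (2 * Q + 1) * hu

theorem sq_dvd_r_of_failure [IsDomain R] [IsLocalHom φ] (hF : (210 : F) ≠ 0)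
    {j : FailureType} (hj0 : j ≠ 0) {ρ y : R} {v : Rotated R} (hq : v.q = 2 * v.r + ρ ^ 2 * y)
    (hr : φ v.r = 0) (hs : φ v.s ≠ 0) (h : v.failure j ρ = 0) : ρ ^ 2 ∣ v.r := by
  rw [failure_of_ne_zero hj0] at h
  by_cases hj1 : j = 1
  · subst hj1
    obtain ⟨u, hu⟩ := (isUnit_of_map_unit φ 3
      (by simpa [map_ofNat φ] using ofNat_ne_zero hF 3)).exists_right_inv
    have htrace : ρ ^ 2 * v.p + 3 * v.r = 0 := by simpa [traceCoeff, detCoeff] using h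
    exact ⟨-u * v.p, by linear_combination u * htrace - v.r * hu⟩
  · have hb := detCoeff_ne_zero hF hj0 hj1
    obtain ⟨u, hu⟩ := (isUnit_of_map_unit φ
      (4 * detCoeff j * v.s + (9 * traceCoeff j - 2 * detCoeff j) * v.r)
      (by simpa [hr, map_ofNat φ, hb, hs] using ofNat_ne_zero hF 4)).exists_right_inv
    refine ⟨-u * (traceCoeff j * (ρ ^ 2 * v.p ^ 2 + 6 * v.p * v.r)
      + 2 * detCoeff j * (y * v.s + v.q ^ 2 - v.p * v.r)), ?_⟩
    linear_combination u * h - v.r * hu - 2 * u * detCoeff j * v.s * hq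

theorem failure_zero_gadget_ne_zero [IsDomain R] (hF : (210 : F) ≠ 0) {ρ t y : R} (hρ : ρ ≠ 0)
    (hρ0 : φ ρ = 0) {v : Rotated R} (hr : v.r = ρ ^ 2 * t) (hq : v.q = ρ ^ 2 * y)
    (hp0 : φ v.p ≠ 0) (hs0 : φ v.s ≠ 0) : (v.gadget ρ).failure 0 ρ ≠ 0 := by
  intro h
  have : ρ * (ρ ^ 2 * (v.gadget ρ).p + 3 * ρ * (v.gadget ρ).q + 3 * (v.gadget ρ).r
      + ρ * (6 * v.r * t * v.s + 3 * y * v.s ^ 2 + 6 * v.q * v.r ^ 2 + ρ ^ 2 * v.q ^ 3)) = 0 := by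
    simp only [failure, if_pos, gadget] at h ⊢
    linear_combination h - 6 * v.r * v.s * hr - 3 * v.s ^ 2 * hq
  have := congrArg φ ((mul_eq_zero.1 this).resolve_left hρ)
  simp [hρ0, hr, hq, map_ofNat φ, hp0, hs0, ofNat_ne_zero hF 3] at this

/-- In the weighted limit this triple has a genuine solution; it is refuted at the next order. -/
theorem not_solves_four_zero [IsDomain R] [IsLocalHom φ] (hF : (210 : F) ≠ 0) {j : FailureType}
    (hj0 : j ≠ 0) {ρ P Q : R} (hρ : ρ ≠ 0) (hρ0 : φ ρ = 0) (hP : φ P = 1) :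
    ¬ Solves 4 j 0 ρ ⟨P, Q, 1, 1⟩ := by
  rintro ⟨hi, hj, hk⟩
  have hQ := two_mul_map_q_eq hF hρ0 hi
  obtain ⟨y, hq⟩ := exists_gadget_q_eq_two_mul_r_add (φ := φ) hF hi
  set v := gadget ρ ⟨P, Q, 1, 1⟩ with hv
  have hr0 : φ v.r = 0 := by
    simp [hv, hρ0, hP, map_ofNat φ]; linear_combination 3 * hQ
  have hp0 : φ v.p ≠ 0 := fun h0 ↦ ofNat_ne_zero hF 9 (by norm_num) (by
    simp [hv, hρ0, hP, map_ofNat φ] at h0; linear_combination 2 * h0 - (6 * φ Q - 3) * hQ)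
  have hs0 : φ v.s ≠ 0 := fun h0 ↦ ofNat_ne_zero hF 9 (by norm_num) (by
    simp [hv, hρ0, map_ofNat φ] at h0; linear_combination 2 * h0 - 3 * hQ)
  obtain ⟨t, ht⟩ := sq_dvd_r_of_failure hF hj0 hq hr0 hs0 hj
  exact failure_zero_gadget_ne_zero hF hρ hρ0 ht (y := 2 * t + y)
    (by linear_combination hq + 2 * ht) hp0 hs0 hk

/-- The assertion that the initial forms of the system at `(0 : 0 : 0 : 1)` have no common zero
with `r = 1`, apart from the one that `not_solves_four_zero` deals with. -/
def NoLimitAtBase (F : Type*) [Field F] (i j k : FailureType) : Prop :=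
  ∀ P Q : F, Solves i j k 0 ⟨P, Q, 1, 1⟩ → i = 4 ∧ k = 0 ∧ j ≠ 0 ∧ P = 1

theorem not_solves_of_noLimitAtBase [IsDomain R] [IsLocalHom φ] (hF : (210 : F) ≠ 0)
    {i j k : FailureType} (hlim : NoLimitAtBase F i j k) {ρ P Q : R} (hρ : ρ ≠ 0) (hρ0 : φ ρ = 0) :
    ¬ Solves i j k 1 ⟨ρ ^ 3 * P, ρ ^ 2 * Q, ρ, 1⟩ := by
  intro h
  have h' : Solves i j k ρ ⟨P, Q, 1, 1⟩ := .of_weight hρ (by simpa [weight] using h)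
  obtain ⟨rfl, rfl, hj, hP⟩ := hlim (φ P) (φ Q) (by simpa [Rotated.map, hρ0] using h'.map φ)
  exact not_solves_four_zero hF hj hρ hρ0 hP h'

end Exceptional

/-! ### Near `(0 : 0 : 0 : 1)` on the plane `p + 3 r = 0` -/

section TracePlane

variable {R F : Type*} [CommRing R] [Field F] {φ : R →+* F}

/-- The cusp `r² U + q³ V = 0` is parametrized by `x = r / q`. -/
theorem exists_cusp_parameter [IsDomain R] [ValuationRing R] [IsLocalHom φ] {q r U V : R}
    (hq : φ q = 0) (hr0 : φ r = 0) (hr : r ≠ 0) (hU : φ U ≠ 0) (hV : φ V ≠ 0)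
    (h : r ^ 2 * U + q ^ 3 * V = 0) :
    ∃ x Q, x ≠ 0 ∧ φ x = 0 ∧ φ Q ≠ 0 ∧ q = x ^ 2 * Q ∧ r = x ^ 3 * Q := by
  have hU0 : U ≠ 0 := by rintro rfl; exact hU (map_zero φ)
  have hq0 : q ≠ 0 := by rintro rfl; simp [hr, hU0] at h
  obtain ⟨x, rfl⟩ : q ∣ r := by
    refine (ValuationRing.dvd_total q r).resolve_right ?_
    rintro ⟨m, rfl⟩
    have : r ^ 2 * (U + r * m ^ 3 * V) = 0 := by linear_combination h
    have := congrArg φ ((mul_eq_zero.1 this).resolve_left (pow_ne_zero _ hr))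
    simp [hr0, hU] at this
  have hx : x ^ 2 * U + q * V = 0 :=
    (mul_eq_zero.1 (by linear_combination h : q ^ 2 * (x ^ 2 * U + q * V) = 0)).resolve_left
      (pow_ne_zero _ hq0)
  have hx0 : φ x = 0 := by simpa [hq, hU] using congrArg φ hx
  obtain ⟨V', hV'⟩ := (isUnit_of_map_unit φ V hV.isUnit).exists_right_inv
  have hqx : q = x ^ 2 * (-U * V') := by linear_combination V' * hx - q * hV'
  have hV'0 : φ V' ≠ 0 := right_ne_zero_of_mul (a := φ V) (by simp [← map_mul, hV'])
  exact ⟨x, -U * V', right_ne_zero_of_mul hr, hx0, by simp [hU, hV'0], hqx,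
    by linear_combination x * hqx⟩

theorem gadget_neg_three_mul (q r : R) :
    gadget 1 ⟨-3 * r, q, r, 1⟩ =
      ⟨r * (-12 * (3 * r ^ 2 + q ^ 2)), q ^ 2 * (2 + 2 * q) + r ^ 2 * (-6 + 2 * q),
        r * (-3 + 6 * q + q ^ 2 - 4 * r ^ 2), q * (3 + q ^ 2) + r ^ 2 * (6 + 6 * q)⟩ := by
  ext <;> simp only [gadget] <;> ring

theorem not_solves_one_zero [IsDomain R] [IsLocalHom φ] (hF : (210 : F) ≠ 0)
    {k : FailureType} {q r : R} (hq : φ q = 0) (hr0 : φ r = 0) (hr : r ≠ 0) :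
    ¬ Solves 1 0 k 1 ⟨-3 * r, q, r, 1⟩ := by
  intro h
  have hw := h.2.1
  simp only [gadget_neg_three_mul, failure, if_pos] at hw
  have h3 := ofNat_ne_zero hF 3
  obtain ⟨u, hu⟩ := (isUnit_of_map_unit φ (3 + q ^ 2 + 3 * q * (2 + 2 * q))
    (by simpa [hq, map_ofNat φ] using h3)).exists_right_inv
  obtain ⟨t, ht⟩ : ∃ t, q = r * t :=
    ⟨-u * (-12 * (3 * r ^ 2 + q ^ 2) + 3 * (-3 + 6 * q + q ^ 2 - 4 * r ^ 2) + 3 * r * (-6 + 2 * q)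
      + r * (6 + 6 * q)), by linear_combination u * hw - q * hu⟩
  refine not_solves_of_gadget_eq_scale (φ := φ) hF hr
    (v' := ⟨-12 * (3 * r ^ 2 + q ^ 2), q * t * (2 + 2 * q) + r * (-6 + 2 * q),
      -3 + 6 * q + q ^ 2 - 4 * r ^ 2, t * (3 + q ^ 2) + r * (6 + 6 * q)⟩) ?_ ?_ ?_ ?_ h
  · rw [gadget_neg_three_mul]
    ext <;> simp only [scale]
    · linear_combination q * (2 + 2 * q) * ht
    · linear_combination (3 + q ^ 2) * ht
  · simp [hq, hr0]
  · simp [hq, hr0]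
  · simpa [hq, hr0, map_ofNat φ] using h3

theorem exists_cusp_equation (hF : (210 : F) ≠ 0) {j : FailureType} (hj0 : j ≠ 0) (hj1 : j ≠ 1)
    {q r : R} (hq : φ q = 0) (hr : φ r = 0)
    (h : (gadget 1 ⟨-3 * r, q, r, 1⟩).failure j 1 = 0) :
    ∃ U V, φ U ≠ 0 ∧ φ V ≠ 0 ∧ r ^ 2 * U + q ^ 3 * V = 0 := by
  rw [failure_of_ne_zero hj0, gadget_neg_three_mul] at h
  set a := 2 + 2 * q with ha
  set b := -6 + 2 * q with hb
  set c := 3 + q ^ 2 with hc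
  set d := 6 + 6 * q with hd
  set π := -12 * (3 * r ^ 2 + q ^ 2) with hπ
  set ρ := -3 + 6 * q + q ^ 2 - 4 * r ^ 2 with hρ
  refine ⟨traceCoeff j * (π + 3 * ρ) ^ 2 + 2 * detCoeff j * (q ^ 2 * a * d
    + b * (q * c + r ^ 2 * d) + 2 * q ^ 2 * a * b + r ^ 2 * b ^ 2 - ρ ^ 2 - π * ρ),
    2 * detCoeff j * (a * c + q * a ^ 2), ?_, ?_, by linear_combination h⟩
  · convert mul_ne_zero (ofNat_ne_zero hF 9) (nine_mul_traceCoeff_sub_ne_zero hF hj0) using 1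
    simp [hq, hr, ha, hb, hc, hd, hπ, hρ, map_ofNat φ]; ring
  · convert mul_ne_zero (ofNat_ne_zero hF 12) (detCoeff_ne_zero hF hj0 hj1) using 1
    simp [hq, ha, hc, map_ofNat φ]; ring

/-- The assertion that the initial forms of the system along the cusp have no common zero. -/
def NoLimitOnCusp (F : Type*) [Field F] (j k : FailureType) : Prop :=
  ∀ Q : F, Q ≠ 0 → ¬ Solves 1 j k 0 ⟨-3 * Q, Q, 0, 1⟩

theorem not_solves_one [IsDomain R] [ValuationRing R] [IsLocalHom φ] (hF : (210 : F) ≠ 0)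
    {j k : FailureType} (hj1 : j ≠ 1)
    (hlim : NoLimitOnCusp F j k) {q r : R} (hq : φ q = 0) (hr0 : φ r = 0) (hr : r ≠ 0) :
    ¬ Solves 1 j k 1 ⟨-3 * r, q, r, 1⟩ := by
  intro h
  rcases eq_or_ne j 0 with rfl | hj0
  · exact not_solves_one_zero hF hq hr0 hr h
  obtain ⟨U, V, hU, hV, hUV⟩ := exists_cusp_equation hF hj0 hj1 hq hr0 h.2.1
  obtain ⟨x, Q, hx, hx0, hQ, rfl, rfl⟩ := exists_cusp_parameter hq hr0 hr hU hV hUV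
  have h' : Solves 1 j k x ⟨-3 * Q, Q, x ^ 2 * Q, 1⟩ := .of_weight hx (by
    convert h using 1
    ext <;> simp only [weight] <;> ring)
  exact hlim (φ Q) hQ (by simpa [Rotated.map, hx0, map_ofNat φ] using h'.map φ)

end TracePlane

theorem not_solves_near_base {R F : Type*} [CommRing R] [IsDomain R] [ValuationRing R] [Field F]
    {φ : R →+* F} [IsLocalHom φ] (hF : (210 : F) ≠ 0) {i j k : FailureType} (hi0 : i ≠ 0)
    (hi6 : i ≠ 6) (hij : ¬ (i = 1 ∧ j = 1)) (hbase : i ≠ 1 → NoLimitAtBase F i j k)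
    (hcusp : i = 1 → NoLimitOnCusp F j k) {p q r : R} (hp : φ p = 0) (hq : φ q = 0)
    (hr : φ r = 0) (hpr : ¬ (p = 0 ∧ r = 0)) : ¬ Solves i j k 1 ⟨p, q, r, 1⟩ := by
  intro h
  by_cases hi1 : i = 1
  · subst hi1
    obtain rfl : p = -3 * r := by
      have trace : p + 3 * r = 0 := by simpa [failure, traceCoeff, detCoeff] using h.1
      linear_combination trace
    exact not_solves_one hF (by simpa using hij) (hcusp rfl) hq hr (by rintro rfl; simp at hpr) h
  by_cases hd : r ^ 3 ∣ p
  · obtain ⟨P, rfl⟩ := hd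
    have hi := h.1
    simp only [failure_of_ne_zero hi0, traceCoeff_eq_one hi6] at hi
    obtain ⟨u, hu⟩ := (isUnit_of_map_unit φ (2 * detCoeff i * (1 + q))
      (by simpa [hq, map_ofNat φ] using ⟨ofNat_ne_zero hF 2,
        detCoeff_ne_zero hF hi0 hi1⟩)).exists_right_inv
    obtain rfl : q = r ^ 2 * (u * ((2 * detCoeff i - 9) + (2 * detCoeff i - 6) * r ^ 2 * P
        - r ^ 4 * P ^ 2)) := by
      linear_combination (-q) * hu + u * hi
    exact not_solves_of_noLimitAtBase hF (hbase hi1) (by rintro rfl; simp at hpr) hr h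
  · obtain ⟨m, hm⟩ := (ValuationRing.dvd_total (r ^ 3) p).resolve_left hd
    have hm0 : φ m = 0 := by
      by_contra hm0
      exact hd ((isUnit_of_map_unit φ m (Ne.isUnit hm0)).dvd_mul_right.mp ⟨1, by simp [hm]⟩)
    exact not_solves_of_cube_small hF hi0 hi1 hi6 (by rintro rfl; simp at hd) hp hq hr hm0 hm h

end Rotated

theorem exists_eq_mul_of_ne_zero {R ι : Type*} [CommRing R] [IsDomain R]
    [ValuationRing R] [Finite ι] {f : ι → R} (hf : f ≠ 0) :
    ∃ g ≠ 0, ∃ u : ι → R, (∀ i, f i = g * u i) ∧ ∃ i, u i = 1 := by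
  obtain ⟨i₁, hi₁⟩ := Function.ne_iff.1 hf
  have : Nonempty ι := ⟨i₁⟩
  have hdir : Directed (fun a b => b ∣ a) f := fun a b =>
    (ValuationRing.dvd_total (f a) (f b)).elim (fun h => ⟨a, dvd_rfl, h⟩) fun h => ⟨b, h, dvd_rfl⟩
  have : IsTrans R (fun a b => b ∣ a) := ⟨fun _ _ _ hab hbc => hbc.trans hab⟩
  obtain ⟨i₀, h₀⟩ := hdir.finite_le id
  have hi₀ : f i₀ ≠ 0 := fun h => hi₁ (zero_dvd_iff.1 (h ▸ h₀ i₁))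
  choose u hu using h₀
  exact ⟨f i₀, hi₀, u, hu, i₀, mul_left_cancel₀ hi₀ ((hu i₀).symm.trans (mul_one _).symm)⟩

namespace Rotated

/-! ### Near `(0 : 1 : 0 : -1)`, which `Ĝ` maps to `(0 : 0 : 0 : 1)` -/

section Preimage

variable {R F : Type*} [CommRing R] [Field F] {φ : R →+* F}

theorem r_eq_zero_of_failure (hF : (210 : F) ≠ 0) (k : FailureType) {r : F}
    (h : failure k 1 ⟨0, 0, r, 0⟩ = 0) : r = 0 := by
  by_cases hk : k = 0
  · simpa [hk, failure, ofNat_ne_zero hF 3] using h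
  · have h' : (9 * traceCoeff k - 2 * detCoeff k : F) * r ^ 2 = 0 := by
      rw [failure_of_ne_zero hk] at h
      linear_combination h
    simpa [nine_mul_traceCoeff_sub_ne_zero hF hk] using h'

theorem map_p_eq_zero_of_failure_gadget [IsDomain R] (hF : (210 : F) ≠ 0) {k : FailureType}
    {g p q r s : R} (hg : g ≠ 0) (hg0 : φ g = 0) (hs : φ s ≠ 0)
    (h : (gadget 1 ⟨g * p, g ^ 2 * q, g * r, s⟩).failure k 1 = 0) : φ p = 0 := by
  have hscale : gadget 1 ⟨g * p, g ^ 2 * q, g * r, s⟩ = scale g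
      ⟨g ^ 2 * (p ^ 3 + 3 * p * r ^ 2 + 6 * g ^ 2 * p * q ^ 2 + 6 * g ^ 2 * q ^ 2 * r),
        g * (2 * p * r * s + g ^ 2 * (5 * q * r ^ 2 + 2 * q ^ 2 * s + 2 * g ^ 2 * q ^ 3
          + 4 * p * q * r + p ^ 2 * q)),
        p * s ^ 2 + g ^ 2 * (2 * r ^ 3 + 6 * q * r * s + 4 * g ^ 2 * q ^ 2 * r + 2 * p * r ^ 2
          + g ^ 2 * p * q ^ 2),
        g * (6 * r ^ 2 * s + 3 * q * s ^ 2 + g ^ 2 * (6 * q * r ^ 2 + g ^ 2 * q ^ 3))⟩ := by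
    ext <;> simp <;> ring
  rw [hscale, failure_scale_eq_zero_iff _ _ hg] at h
  have h' : failure k 1 ⟨0, 0, φ p * φ s ^ 2, 0⟩ = 0 := by
    simpa only [failure_map, map, map_mul, map_add, map_pow, hg0, map_one, map_zero, zero_mul,
      zero_pow two_ne_zero, add_zero] using
      (failure_map φ k (1 : R) _).trans ((congrArg φ h).trans φ.map_zero)
  simpa [hs] using r_eq_zero_of_failure hF k h'

theorem gadget_near_preimage (p r σ : R) :
    gadget 1 ⟨p, 1, r, -1 + σ⟩ =
      ⟨6 * (p + r) + (p ^ 3 + 3 * p * r ^ 2),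
        2 * σ + 5 * r ^ 2 + 2 * p * r + 2 * p * r * σ + p ^ 2,
        2 * (p - r) + 6 * r * σ + p * (σ ^ 2 - 2 * σ) + 2 * r ^ 3 + 2 * p * r ^ 2,
        4 - 6 * σ + 3 * σ ^ 2 + 6 * r ^ 2 * σ⟩ := by
  ext <;> simp <;> ring

theorem not_solves_zero_near_preimage (hF : (210 : F) ≠ 0) {i k : FailureType} {p r σ : R}
    (hp : φ p = 0) (hr : φ r = 0) (hσ : φ σ = 0) : ¬ Solves i 0 k 1 ⟨p, 1, r, -1 + σ⟩ := by
  rintro ⟨-, hj, -⟩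
  have h4 : (4 : F) = 0 := by
    simpa [failure, gadget_near_preimage, hp, hr, hσ, map_ofNat φ] using congrArg φ hj
  exact absurd h4 (ofNat_ne_zero hF 4)

theorem not_solves_one_near_preimage [IsDomain R] [IsLocalHom φ] (hF : (210 : F) ≠ 0)
    {j k : FailureType} (hj0 : j ≠ 0) {r σ : R} (hr0 : r ≠ 0) (hr : φ r = 0) (hσ : φ σ = 0) :
    ¬ Solves 1 j k 1 ⟨-3 * r, 1, r, -1 + σ⟩ := by
  rintro ⟨-, hj, hk⟩
  set p' : R := -12 - 36 * r ^ 2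
  set q' : R := 2 * σ - 6 * r ^ 2 * σ + 8 * r ^ 2
  set r' : R := -8 + 12 * σ - 3 * σ ^ 2 - 4 * r ^ 2
  set s' : R := 4 - 6 * σ + 3 * σ ^ 2 + 6 * r ^ 2 * σ
  have hgadget : gadget 1 ⟨-3 * r, 1, r, -1 + σ⟩ = ⟨r * p', q', r * r', s'⟩ := by
    rw [gadget_near_preimage]
    ext <;> simp only [p', q', r', s'] <;> ring
  have hp' : φ p' = -12 := by simp [p', hr, map_ofNat φ]
  have hq' : φ q' = 0 := by simp [q', hr, hσ]
  have hr' : φ r' = -8 := by simp [r', hr, hσ, map_ofNat φ]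
  have hs' : φ s' = 4 := by simp [s', hσ, map_ofNat φ]
  rw [hgadget] at hj hk
  rw [failure_of_ne_zero hj0] at hj
  by_cases hj1 : j = 1
  · have h : r ^ 2 * (p' + 3 * r') ^ 2 = 0 := by
      simp only [hj1, traceCoeff, detCoeff, Matrix.cons_val] at hj
      linear_combination hj
    have h36 : (-12 + 3 * -8 : F) = 0 := by
      simpa [hp', hr', map_ofNat φ] using
        congrArg φ ((mul_eq_zero.1 h).resolve_left (pow_ne_zero _ hr0))
    exact absurd (by linear_combination -h36) (ofNat_ne_zero hF 36)
  · obtain ⟨u, hu⟩ := (isUnit_of_map_unit φ (2 * (detCoeff j : R) * (s' + q'))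
      (by simpa [hq', hs', map_ofNat φ] using
        ⟨⟨ofNat_ne_zero hF 2, detCoeff_ne_zero hF hj0 hj1⟩,
          ofNat_ne_zero hF 4⟩)).exists_right_inv
    have hdvd : q' = r ^ 2 * (-u * (traceCoeff j * (p' + 3 * r') ^ 2
        - 2 * detCoeff j * (r' ^ 2 + p' * r'))) := by
      linear_combination u * hj - q' * hu
    rw [hdvd] at hk
    have h12 := map_p_eq_zero_of_failure_gadget hF hr0 hr (hs' ▸ ofNat_ne_zero hF 4) hk
    exact absurd (by linear_combination hp' - h12) (ofNat_ne_zero hF 12)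

theorem detCoeff_mul_map_eq (hF : (210 : F) ≠ 0) {n : ℕ} {p r τ : R} (hpr : φ p + φ r = 0)
    (hτ : (p + 3 * r) ^ 2 + 2 * (n : R) * (τ - r ^ 2 - p * r) = 0) :
    (n : F) * φ τ = -2 * φ p ^ 2 := by
  have h := congrArg φ hτ
  simp only [map_add, map_sub, map_mul, map_pow, map_ofNat φ, map_natCast, map_zero] at h
  have hr : φ r = -φ p := by linear_combination hpr
  rw [hr] at h
  apply mul_left_cancel₀ (ofNat_ne_zero hF 2)
  linear_combination h

theorem not_solves_near_preimage_of_pinched [IsDomain R] (hF : (210 : F) ≠ 0)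
    {i j k : FailureType} (hj0 : j ≠ 0) {g p r τ : R} (hg : g ≠ 0) (hg0 : φ g = 0)
    (hpr : ¬ (φ p = 0 ∧ φ r = 0))
    (hτ : (p + 3 * r) ^ 2 + 2 * (detCoeff i : R) * (τ - r ^ 2 - p * r) = 0)
    (hN : (9 * detCoeff i * traceCoeff j - 2 * detCoeff j : F) ≠ 0) :
    ¬ Solves i j k 1 ⟨g * p, 1, g * r, -1 + g ^ 2 * τ⟩ := by
  rintro ⟨-, hj, hk⟩
  set σ := g ^ 2 * τ with hσ
  set p' := 6 * (p + r) + g ^ 2 * (p ^ 3 + 3 * p * r ^ 2) with hp'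
  set q' := 2 * τ + 5 * r ^ 2 + 2 * p * r + 2 * p * r * σ + p ^ 2 with hq'
  set r' := 2 * (p - r) + 6 * r * σ + p * (σ ^ 2 - 2 * σ) + g ^ 2 * (2 * r ^ 3 + 2 * p * r ^ 2)
    with hr'
  set s' := 4 - 6 * σ + 3 * σ ^ 2 + 6 * (g * r) ^ 2 * σ with hs'
  have hgadget : gadget 1 ⟨g * p, 1, g * r, -1 + σ⟩ = ⟨g * p', g ^ 2 * q', g * r', s'⟩ := by
    rw [gadget_near_preimage]
    ext <;> simp only [hp', hq', hr', hs', hσ] <;> ring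
  rw [hgadget] at hj hk
  have hφσ : φ σ = 0 := by simp [hσ, hg0]
  have hφs : φ s' = 4 := by simp [hs', hφσ, map_ofNat φ]
  have hφp' : φ p' = 0 :=
    map_p_eq_zero_of_failure_gadget hF hg hg0 (hφs ▸ ofNat_ne_zero hF 4) hk
  have hsum : φ p + φ r = 0 := by
    simpa [hp', hg0, map_ofNat φ, ofNat_ne_zero hF 6] using hφp'
  have hφr : φ r = -φ p := by linear_combination hsum
  have hφp : φ p ≠ 0 := fun h => hpr ⟨h, by rw [hφr, h, neg_zero]⟩
  have hφq' : φ q' = 4 * φ p ^ 2 + 2 * φ τ := by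
    simp [hq', hφσ, map_ofNat φ, hφr]; ring
  have hφr' : φ r' = 4 * φ p := by
    simp [hr', hφσ, hg0, map_ofNat φ, hφr]; ring
  have hj' : g ^ 2 * (traceCoeff j * (p' + 3 * r') ^ 2
      + 2 * detCoeff j * (q' * s' + g ^ 2 * q' ^ 2 - r' ^ 2 - p' * r')) = 0 := by
    rw [failure_of_ne_zero hj0] at hj
    linear_combination hj
  have hjF : (traceCoeff j * (3 * (4 * φ p)) ^ 2
      + 2 * detCoeff j * ((4 * φ p ^ 2 + 2 * φ τ) * 4 - (4 * φ p) ^ 2) : F) = 0 := by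
    simpa [hφp', hg0, hφs, hφq', hφr', map_ofNat φ] using
      congrArg φ ((mul_eq_zero.1 hj').resolve_left (pow_ne_zero _ hg))
  have hiF := detCoeff_mul_map_eq hF hsum hτ
  refine mul_ne_zero (mul_ne_zero (ofNat_ne_zero hF 16) (pow_ne_zero 2 hφp)) hN ?_
  linear_combination (detCoeff i : F) * hjF - 16 * (detCoeff j : F) * hiF

theorem not_solves_near_preimage [IsDomain R] [ValuationRing R] [IsLocalHom φ]
    (hF : (210 : F) ≠ 0) {i j k : FailureType} (hi0 : i ≠ 0) (hi6 : i ≠ 6) {p r s : R}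
    (hN : i ≠ 1 → j ≠ 0 → (9 * detCoeff i * traceCoeff j - 2 * detCoeff j : F) ≠ 0)
    (hp : φ p = 0) (hr : φ r = 0) (hs : φ s = -1) (hpr : ¬ (p = 0 ∧ r = 0)) :
    ¬ Solves i j k 1 ⟨p, 1, r, s⟩ := by
  intro h
  obtain ⟨σ, rfl⟩ : ∃ σ, s = -1 + σ := ⟨s + 1, by ring⟩
  have hσ : φ σ = 0 := by simpa using hs
  have hj0 : j ≠ 0 := by
    rintro rfl
    exact not_solves_zero_near_preimage hF hp hr hσ h
  have hi := h.1
  rw [failure_of_ne_zero hi0, traceCoeff_eq_one hi6] at hi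
  by_cases hi1 : i = 1
  · subst hi1
    obtain rfl : p = -3 * r := by
      have hi' : p + 3 * r = 0 := by simpa [detCoeff] using hi
      linear_combination hi'
    exact not_solves_one_near_preimage hF hj0 (by rintro rfl; simp at hpr) hr hσ h
  obtain ⟨g, hg, u, hu, m, hm⟩ := exists_eq_mul_of_ne_zero (f := ![p, r]) (by simpa using hpr)
  obtain ⟨rfl, rfl⟩ : p = g * u 0 ∧ r = g * u 1 := ⟨hu 0, hu 1⟩
  have hφu : ¬ (φ (u 0) = 0 ∧ φ (u 1) = 0) := by fin_cases m <;> simp_all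
  have hg0 : φ g = 0 := by fin_cases m <;> simp_all
  obtain ⟨v, hv⟩ := (isUnit_of_map_unit φ (2 * (detCoeff i : R)) (by
    simpa [map_ofNat φ] using
      ⟨ofNat_ne_zero hF 2, detCoeff_ne_zero hF hi0 hi1⟩)).exists_right_inv
  set τ := v * (2 * (detCoeff i : R) * (u 1 ^ 2 + u 0 * u 1) - (u 0 + 3 * u 1) ^ 2)
  obtain rfl : σ = g ^ 2 * τ := by
    push_cast at hi
    linear_combination v * hi - σ * hv
  refine not_solves_near_preimage_of_pinched hF hj0 hg hg0 hφu ?_ (hN hi1 hj0) h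
  linear_combination
    (2 * (detCoeff i : R) * (u 1 ^ 2 + u 0 * u 1) - (u 0 + 3 * u 1) ^ 2) * hv

end Preimage

end Rotated

namespace Signature

variable {A : Type*} [CommRing A]

/-- The rotated coordinates of a signature. -/
@[simps]
def rotate (v : Signature A) : Rotated A where
  p := v.w + 3 * v.x + 3 * v.y + v.z
  q := v.w + v.x - v.y - v.z
  r := v.w - v.x - v.y + v.z
  s := v.w - 3 * v.x + 3 * v.y - v.z

theorem gadget_rotate (v : Signature A) : v.rotate.gadget 1 = v.gadget.rotate.scale 16 := by
  ext <;> simp <;> ring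

theorem failure_rotate (j : FailureType) (v : Signature A) :
    v.rotate.failure j 1 = (if j = 0 then 8 else 16) * v.failure j := by
  unfold failure Rotated.failure
  split_ifs <;> simp <;> ring

theorem Solves.rotate {i j k : FailureType} {v : Signature A} (h : v.Solves i j k) :
    v.rotate.Solves i j k 1 := by
  simp only [Rotated.Solves, gadget_rotate, Rotated.gadget_scale, Rotated.failure_scale,
    failure_rotate, h.1, h.2.1, h.2.2, mul_zero, and_self]

/-- The conjugation of the matrix `[[w, x], [y, z]]` by a diagonal matrix, which for a cube root of
unity `ω` commutes with `Ĝ`. -/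
@[simps]
def twist (ω : A) (v : Signature A) : Signature A := ⟨v.w, ω * v.x, ω ^ 2 * v.y, v.z⟩

theorem gadget_twist {ω : A} (hω : ω ^ 3 = 1) (v : Signature A) :
    (v.twist ω).gadget = v.gadget.twist ω := by
  ext <;> simp only [gadget, twist]
  · linear_combination (2 * v.x ^ 3 + v.y ^ 3 * (ω ^ 3 + 1)) * hω
  · linear_combination (2 * ω * v.x ^ 2 * v.y + ω * v.y ^ 2 * v.z) * hω
  · linear_combination 2 * ω ^ 2 * v.x * v.y ^ 2 * hω
  · linear_combination (v.x ^ 3 + 2 * v.y ^ 3 * (ω ^ 3 + 1)) * hω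

theorem failure_twist (j : FailureType) {ω : A} (hω : ω ^ 3 = 1) (v : Signature A) :
    (v.twist ω).failure j = v.failure j := by
  unfold failure
  split_ifs <;> simp only [twist]
  linear_combination detCoeff j * v.x * v.y * hω

theorem Solves.twist {i j k : FailureType} {v : Signature A} (h : v.Solves i j k) {ω : A}
    (hω : ω ^ 3 = 1) : (v.twist ω).Solves i j k := by
  simp only [Solves, gadget_twist hω, failure_twist _ hω, h.1, h.2.1, h.2.2, and_self]

/-- The signature lies on the line `w + z = x + y = 0`, all of whose points solve the problem, or on
one of its twists. -/
def OnInvariantLine (v : Signature A) : Prop := v.w + v.z = 0 ∧ v.x ^ 3 + v.y ^ 3 = 0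

theorem OnInvariantLine.of_twist {ω : A} (hω : ω ^ 3 = 1) {v : Signature A}
    (h : (v.twist ω).OnInvariantLine) : v.OnInvariantLine :=
  ⟨h.1, by
    have hxy : (ω * v.x) ^ 3 + (ω ^ 2 * v.y) ^ 3 = 0 := h.2
    linear_combination hxy - (v.x ^ 3 + v.y ^ 3 * (ω ^ 3 + 1)) * hω⟩

theorem onInvariantLine_of_rotate [IsDomain A] (h4 : (4 : A) ≠ 0) {v : Signature A}
    (hp : v.rotate.p = 0) (hr : v.rotate.r = 0) : v.OnInvariantLine := by
  simp only [rotate] at hp hr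
  have hxy : v.x + v.y = 0 := by
    apply mul_left_cancel₀ h4
    linear_combination hp - hr
  exact ⟨by linear_combination hr + hxy, by
    linear_combination (v.x ^ 2 - v.x * v.y + v.y ^ 2) * hxy⟩

end Signature

theorem Rotated.Solves.scale {A : Type*} [CommRing A] {i j k : FailureType} {ρ : A} {v : Rotated A}
    (h : v.Solves i j k ρ) (g : A) : (v.scale g).Solves i j k ρ := by
  simp only [Solves, gadget_scale, failure_scale, h.1, h.2.1, h.2.2, mul_zero, and_self]

/-- The non-degeneracy conditions on a triple of failure types in the residue field `F` which keep
integral solutions off the invariant lines away from the points `(0 : 0 : 0 : 1)` and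
`(0 : 1 : 0 : -1)` in rotated coordinates. -/
structure Nondegenerate (F : Type*) [Field F] (i j k : FailureType) : Prop where
  char_ne : (210 : F) ≠ 0
  ne_zero : i ≠ 0
  ne_six : i ≠ 6
  not_one_one : ¬ (i = 1 ∧ j = 1)
  base : i ≠ 1 → Rotated.NoLimitAtBase F i j k
  cusp : i = 1 → Rotated.NoLimitOnCusp F j k
  preimage : i ≠ 1 → j ≠ 0 → (9 * detCoeff i * traceCoeff j - 2 * detCoeff j : F) ≠ 0

namespace Signature

section NearLine

variable {R F : Type*} [CommRing R] [IsDomain R] [ValuationRing R] [Field F] {φ : R →+* F}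
  [IsLocalHom φ] {i j k : FailureType} {v : Signature R}

theorem Solves.onInvariantLine_of_map_eq_base (h : v.Solves i j k) (hF : Nondegenerate F i j k)
    (hv : v.map φ = ⟨1, -1, 1, -1⟩) : v.OnInvariantLine := by
  simp only [Signature.map, mk.injEq] at hv
  obtain ⟨hw, hx, hy, hz⟩ := hv
  have h4F := ofNat_ne_zero hF.char_ne 4
  have h4 : (4 : R) ≠ 0 := fun h => h4F (by simpa [map_ofNat φ] using congrArg φ h)
  have hs : φ v.rotate.s = 8 := by simp [Signature.rotate, hw, hx, hy, hz, map_ofNat φ]; norm_num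
  obtain ⟨u, hu⟩ := (isUnit_of_map_unit φ v.rotate.s
    (hs ▸ (ofNat_ne_zero hF.char_ne 8).isUnit)).exists_left_inv
  by_contra hcon
  have hsol := h.rotate.scale u
  simp only [Rotated.scale, hu] at hsol
  refine Rotated.not_solves_near_base (φ := φ) hF.char_ne hF.ne_zero hF.ne_six hF.not_one_one
    hF.base hF.cusp ?_ ?_ ?_ ?_ hsol
  · simp [Signature.rotate, hw, hx, hy, hz, map_ofNat φ]
  · simp [Signature.rotate, hw, hx, hy, hz]
  · simp [Signature.rotate, hw, hx, hy, hz]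
  · simpa [left_ne_zero_of_mul_eq_one hu] using fun hp hr =>
      hcon (onInvariantLine_of_rotate h4 hp hr)

theorem Solves.onInvariantLine_of_map_eq_preimage (h : v.Solves i j k)
    (hF : Nondegenerate F i j k) (hv : v.map φ = ⟨1, 1, -1, -1⟩) : v.OnInvariantLine := by
  simp only [Signature.map, mk.injEq] at hv
  obtain ⟨hw, hx, hy, hz⟩ := hv
  have h4F := ofNat_ne_zero hF.char_ne 4
  have h4 : (4 : R) ≠ 0 := fun h => h4F (by simpa [map_ofNat φ] using congrArg φ h)
  have hq : φ v.rotate.q = 4 := by simp [Signature.rotate, hw, hx, hy, hz]; norm_num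
  have hs : φ v.rotate.s = -4 := by simp [Signature.rotate, hw, hx, hy, hz, map_ofNat φ]; norm_num
  obtain ⟨u, hu⟩ := (isUnit_of_map_unit φ v.rotate.q (hq ▸ h4F.isUnit)).exists_left_inv
  by_contra hcon
  have hsol := h.rotate.scale u
  simp only [Rotated.scale, hu] at hsol
  refine Rotated.not_solves_near_preimage (φ := φ) hF.char_ne hF.ne_zero hF.ne_six hF.preimage
    ?_ ?_ ?_ ?_ hsol
  · simp [Signature.rotate, hw, hx, hy, hz, map_ofNat φ]
  · simp [Signature.rotate, hw, hx, hy, hz]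
  · have h1 : φ u * 4 = 1 := by rw [← hq, ← map_mul, hu, map_one]
    rw [map_mul, hs]
    linear_combination -h1
  · simpa [left_ne_zero_of_mul_eq_one hu] using fun hp hr =>
      hcon (onInvariantLine_of_rotate h4 hp hr)

theorem Solves.onInvariantLine_of_map (h : v.Solves i j k) (hF : Nondegenerate F i j k)
    (hω : ∀ o : F, o ^ 3 = 1 → ∃ ω : R, ω ^ 3 = 1 ∧ φ ω = o) (hw : φ v.w = 1) (hz : φ v.z = -1)
    (hxy : φ v.x * φ v.y = -1) (hx : φ v.x ^ 3 = 1 ∨ φ v.x ^ 3 = -1) : v.OnInvariantLine := by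
  have hxy3 : φ v.x ^ 3 * φ v.y ^ 3 = -1 := by rw [← mul_pow, hxy]; ring
  obtain hx | hx := hx <;> rw [hx] at hxy3
  · obtain ⟨ω, hω3, hωy⟩ := hω (-φ v.y) (by linear_combination -hxy3)
    refine ((h.twist hω3).onInvariantLine_of_map_eq_preimage hF (φ := φ) ?_).of_twist hω3
    ext <;> simp only [Signature.map, Signature.twist, map_mul, map_pow, hw, hz, hωy]
    · linear_combination -hxy
    · linear_combination hxy3
  · obtain ⟨ω, hω3, hωy⟩ := hω (φ v.y) (by linear_combination -hxy3)
    refine ((h.twist hω3).onInvariantLine_of_map_eq_base hF (φ := φ) ?_).of_twist hω3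
    ext <;> simp only [Signature.map, Signature.twist, map_mul, map_pow, hw, hz, hωy]
    · linear_combination hxy
    · linear_combination -hxy3

end NearLine

section Deformation

variable {A B : Type*} [CommRing A] [CommRing B]

/-- The point `v + g t` on the line through `v` in direction `t`. -/
@[simps]
def deform (v : Signature A) (g : A) (t : Signature A) : Signature A :=
  ⟨v.w + g * t.w, v.x + g * t.x, v.y + g * t.y, v.z + g * t.z⟩

/-- The divided difference `(Ĝ (v + g t) - Ĝ v) / g`, as a polynomial. For `g = 0` it is the
derivative of `Ĝ` at `v` in direction `t`. -/
@[simps]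
def gadgetSlope (v : Signature A) (g : A) (t : Signature A) : Signature A where
  w := t.w * (3 * v.w ^ 2 + 3 * g * v.w * t.w + g ^ 2 * t.w ^ 2)
    + 2 * t.x * (3 * v.x ^ 2 + 3 * g * v.x * t.x + g ^ 2 * t.x ^ 2)
    + t.y * (3 * v.y ^ 2 + 3 * g * v.y * t.y + g ^ 2 * t.y ^ 2)
  x := t.w * (2 * v.w + g * t.w) * (v.x + g * t.x) + v.w ^ 2 * t.x
    + 2 * (t.x * (2 * v.x + g * t.x) * (v.y + g * t.y) + v.x ^ 2 * t.y)
    + t.y * (2 * v.y + g * t.y) * (v.z + g * t.z) + v.y ^ 2 * t.z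
  y := t.x * (2 * v.x + g * t.x) * (v.w + g * t.w) + v.x ^ 2 * t.w
    + 2 * (t.y * (2 * v.y + g * t.y) * (v.x + g * t.x) + v.y ^ 2 * t.x)
    + t.z * (2 * v.z + g * t.z) * (v.y + g * t.y) + v.z ^ 2 * t.y
  z := t.x * (3 * v.x ^ 2 + 3 * g * v.x * t.x + g ^ 2 * t.x ^ 2)
    + 2 * t.y * (3 * v.y ^ 2 + 3 * g * v.y * t.y + g ^ 2 * t.y ^ 2)
    + t.z * (3 * v.z ^ 2 + 3 * g * v.z * t.z + g ^ 2 * t.z ^ 2)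

/-- The divided difference of `failure j`, analogous to `gadgetSlope`. -/
def failureSlope (j : FailureType) (v : Signature A) (g : A) (t : Signature A) : A :=
  if j = 0 then t.w
  else traceCoeff j * ((t.w + t.z) * (2 * (v.w + v.z) + g * (t.w + t.z)))
    + detCoeff j * (v.x * t.y + t.x * v.y - v.w * t.z - t.w * v.z + g * (t.x * t.y - t.w * t.z))

theorem gadget_deform (v : Signature A) (g : A) (t : Signature A) :
    (v.deform g t).gadget = v.gadget.deform g (v.gadgetSlope g t) := by
  ext <;> simp only [gadget, deform, gadgetSlope] <;> ring

theorem failure_deform (j : FailureType) (v : Signature A) (g : A) (t : Signature A) :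
    (v.deform g t).failure j = v.failure j + g * v.failureSlope j g t := by
  simp only [failure, deform, failureSlope]
  split_ifs <;> ring

theorem gadgetSlope_map (φ : A →+* B) (v : Signature A) (g : A) (t : Signature A) :
    (v.map φ).gadgetSlope (φ g) (t.map φ) = (v.gadgetSlope g t).map φ := by
  ext <;> simp [map_ofNat φ]

theorem failureSlope_map (φ : A →+* B) (j : FailureType) (v : Signature A) (g : A)
    (t : Signature A) :
    (v.map φ).failureSlope j (φ g) (t.map φ) = φ (v.failureSlope j g t) := by
  simp [failureSlope, apply_ite φ, map_ofNat φ]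

/-- The direction `t` is tangent at `v` to the first two equations of `Solves i j k`. -/
def IsTangent₂ (i j : FailureType) (v t : Signature A) : Prop :=
  v.failureSlope i 0 t = 0 ∧ v.gadget.failureSlope j 0 (v.gadgetSlope 0 t) = 0

/-- The direction `t` is tangent at `v` to the three equations of `Solves i j k`. -/
def IsTangent (i j k : FailureType) (v t : Signature A) : Prop :=
  v.IsTangent₂ i j t ∧
    v.gadget.gadget.failureSlope k 0 (v.gadget.gadgetSlope 0 (v.gadgetSlope 0 t)) = 0

/-- Every tangent direction to `Solves i j k` at `v` is radial, so that `v` is an isolated point,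
of multiplicity one, of the projective solution set. -/
def IsRigid (i j k : FailureType) (v : Signature A) : Prop :=
  ∀ t, v.IsTangent i j k t → ∃ c, t = v.scale c

end Deformation

section Tangent

variable {R F : Type*} [CommRing R] [IsDomain R] [Field F] {φ : R →+* F}
variable {i j k : FailureType} {v t : Signature R} {g : R}

theorem failureSlope_eq_zero (hg : g ≠ 0) (hv : v.failure j = 0)
    (h : (v.deform g t).failure j = 0) : v.failureSlope j g t = 0 := by
  rw [failure_deform, hv, zero_add] at h
  exact (mul_eq_zero.1 h).resolve_left hg

theorem Solves.isTangent₂ (hv : v.Solves i j k) (h : (v.deform g t).Solves i j k) (hg : g ≠ 0)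
    (hφ : φ g = 0) : (v.map φ).IsTangent₂ i j (t.map φ) := by
  obtain ⟨h0, h1, -⟩ := h
  rw [gadget_deform] at h1
  simp only [IsTangent₂, ← hφ, gadget_map, gadgetSlope_map, failureSlope_map,
    failureSlope_eq_zero hg hv.1 h0, failureSlope_eq_zero hg hv.2.1 h1, map_zero, and_self]

theorem Solves.isTangent (hv : v.Solves i j k) (h : (v.deform g t).Solves i j k) (hg : g ≠ 0)
    (hφ : φ g = 0) : (v.map φ).IsTangent i j k (t.map φ) := by
  refine ⟨hv.isTangent₂ h hg hφ, ?_⟩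
  have h2 := h.2.2
  rw [gadget_deform, gadget_deform] at h2
  simp only [← hφ, gadget_map, gadgetSlope_map, failureSlope_map,
    failureSlope_eq_zero hg hv.2.2 h2, map_zero]

theorem exists_eq_deform [ValuationRing R] {v v' : Signature R} (hne : v' ≠ v)
    (hφ : v'.map φ = v.map φ) :
    ∃ g ≠ 0, φ g = 0 ∧ ∃ t : Signature R, v' = v.deform g t ∧ t.map φ ≠ ⟨0, 0, 0, 0⟩ := by
  let f : Fin 4 → R := ![v'.w - v.w, v'.x - v.x, v'.y - v.y, v'.z - v.z]
  have hf : f ≠ 0 := fun h => hne <| by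
    simpa [f, funext_iff, Fin.forall_fin_succ, sub_eq_zero, Signature.ext_iff] using h
  have hφf : ∀ m, φ (f m) = 0 := by
    simpa [f, Fin.forall_fin_succ, sub_eq_zero, Signature.ext_iff] using hφ
  obtain ⟨g, hg, u, hu, m, hm⟩ := exists_eq_mul_of_ne_zero hf
  have hφg : φ g = 0 := by rw [← hφf m, hu, hm, mul_one]
  refine ⟨g, hg, hφg, ⟨u 0, u 1, u 2, u 3⟩, ?_, fun h => ?_⟩
  · ext <;> simp [← hu, f]
  · have hu0 : ∀ m, φ (u m) = 0 := by
      simpa [Fin.forall_fin_succ, Signature.ext_iff] using h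
    simpa [hm] using hu0 m

theorem eq_of_forall_deform [ValuationRing R] {v' : Signature R} (hφ : v'.map φ = v.map φ)
    (hnorm : v'.w = 1 ∧ v.w = 1 ∨ v'.x = 1 ∧ v.x = 1)
    (h : ∀ g t, g ≠ 0 → φ g = 0 → v' = v.deform g t → ∃ c, t.map φ = (v.map φ).scale c) :
    v' = v := by
  by_contra hne
  obtain ⟨g, hg, hφg, t, hv', ht⟩ := exists_eq_deform hne hφ
  obtain ⟨c, hc⟩ := h g t hg hφg hv'
  have hc0 : c = 0 := by
    rw [hv'] at hnorm
    simp only [Signature.ext_iff, Signature.map] at hc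
    obtain ⟨h', h1⟩ | ⟨h', h1⟩ := hnorm
    · have : t.w = 0 := by simpa [h1, hg] using h'
      simpa [this, h1] using hc.1.symm
    · have : t.x = 0 := by simpa [h1, hg] using h'
      simpa [this, h1] using hc.2.1.symm
  exact ht (by rw [hc, hc0]; ext <;> simp)

theorem Solves.eq_of_isRigid [ValuationRing R] {v' : Signature R} (hv : v.Solves i j k)
    (hrigid : (v.map φ).IsRigid i j k) (h : v'.Solves i j k) (hφ : v'.map φ = v.map φ)
    (hnorm : v'.w = 1 ∧ v.w = 1 ∨ v'.x = 1 ∧ v.x = 1) : v' = v :=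
  eq_of_forall_deform hφ hnorm fun _ _ hg hφg hv' =>
    hrigid _ (hv.isTangent (hv' ▸ h) hg hφg)

end Tangent

/-- Solutions `v` of `Solves i j k`, with their types, at which the solution set is reduced. -/
def rigidSolutions : List (FailureType × FailureType × FailureType × Signature ℤ) :=
  [(2, 2, 0, ⟨0, 1, -1, 1⟩), (2, 2, 2, ⟨0, 1, -1, 1⟩), (2, 2, 2, ⟨1, -1, 1, 0⟩),
    (2, 0, 2, ⟨1, -1, 1, 0⟩), (5, 2, 2, ⟨1, -1, 0, 1⟩), (5, 2, 2, ⟨1, 0, -1, 1⟩),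
    (5, 0, 2, ⟨1, 0, -1, 1⟩)]

section Rigid

variable {F : Type*} [Field F]

theorem exists_eq_scale {t : Signature F} {n : F} (hn : n ≠ 0) (c : F) {w x y z : F}
    (hw : n * t.w = n * (c * w)) (hx : n * t.x = n * (c * x)) (hy : n * t.y = n * (c * y))
    (hz : n * t.z = n * (c * z)) : ∃ c, t = scale c ⟨w, x, y, z⟩ :=
  ⟨c, Signature.ext (mul_left_cancel₀ hn hw) (mul_left_cancel₀ hn hx) (mul_left_cancel₀ hn hy)
    (mul_left_cancel₀ hn hz)⟩

theorem isRigid_of_mem_rigidSolutions (hF : (210 : F) ≠ 0) (hF' : (17 : F) ≠ 0)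
    {i j k : FailureType} {e : Signature ℤ} (h : (i, j, k, e) ∈ rigidSolutions) :
    (e.map (Int.castRingHom F)).IsRigid i j k := by
  -- Each coordinate of a tangent vector satisfies an equation with a coefficient dividing
  -- `1224 = 2³ · 3² · 17`.
  have hN : (1224 : F) ≠ 0 := by
    simpa [show (72 : F) * 17 = 1224 by norm_num] using mul_ne_zero (ofNat_ne_zero hF 72) hF'
  simp only [rigidSolutions, List.mem_cons, List.not_mem_nil, or_false, Prod.mk.injEq] at h
  rcases h with ⟨rfl, rfl, rfl, rfl⟩ | ⟨rfl, rfl, rfl, rfl⟩ | ⟨rfl, rfl, rfl, rfl⟩ |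
    ⟨rfl, rfl, rfl, rfl⟩ | ⟨rfl, rfl, rfl, rfl⟩ | ⟨rfl, rfl, rfl, rfl⟩ | ⟨rfl, rfl, rfl, rfl⟩
  all_goals
    rintro t ⟨⟨h1, h2⟩, h3⟩
    simp only [failureSlope, gadgetSlope, gadget, map, traceCoeff, detCoeff, Matrix.cons_val,
      Fin.isValue, Fin.reduceEq, ↓reduceIte, eq_intCast, Int.cast_zero, Int.cast_one, Int.cast_neg,
      Nat.cast_one, Nat.cast_ofNat, ne_eq, OfNat.ofNat_ne_zero, not_false_eq_true, zero_pow,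
      one_pow, even_two, Even.neg_pow, mul_zero, zero_mul, mul_one, one_mul, add_zero,
      zero_add] at h1 h2 h3 ⊢
  · exact exists_eq_scale hN t.x (by linear_combination 408 * h3) (by ring)
      (by linear_combination -306 * h1 + 102 * h2 + 136 * h3)
      (by linear_combination 765 * h1 - 51 * h2 - 272 * h3)
  · exact exists_eq_scale hN t.x (by linear_combination 153 * h2 + 153 * h3) (by ring)
      (by linear_combination -306 * h1 + 153 * h2 + 51 * h3)
      (by linear_combination 765 * h1 - 153 * h2 - 102 * h3)
  · exact exists_eq_scale hN t.w (by ring) (by linear_combination 459 * h1 - 51 * h3)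
      (by linear_combination -765 * h1 + 153 * h2 + 102 * h3)
      (by linear_combination 153 * h2 + 153 * h3)
  · exact exists_eq_scale hN t.w (by ring) (by linear_combination 459 * h1 - 51 * h3)
      (by linear_combination -918 * h1 + 408 * h2 + 102 * h3)
      (by linear_combination -153 * h1 + 408 * h2 + 153 * h3)
  · exact exists_eq_scale hN t.w (by ring) (by linear_combination 408 * h1 + 153 * h2 - 51 * h3)
      (by linear_combination -306 * h1)
      (by linear_combination -1734 * h1 - 1020 * h2 + 204 * h3)
  · exact exists_eq_scale hN t.w (by ring) (by linear_combination -306 * h1)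
      (by linear_combination -1326 * h1 - 867 * h2 + 153 * h3)
      (by linear_combination 1734 * h1 + 1020 * h2 - 204 * h3)
  · exact exists_eq_scale hN t.w (by ring) (by linear_combination -306 * h1)
      (by linear_combination 408 * h2)
      (by linear_combination 174 * h1 - 480 * h2 - 24 * h3)

end Rigid

section Scalar

variable {R F : Type*} [CommRing R] [IsDomain R] [Field F] {φ : R →+* F}
variable {i j : FailureType} {v v' : Signature R}

theorem failure_five_deform {A : Type*} [CommRing A] {v : Signature A} (hx : v.x = 0)
    (hy : v.y = 0) (hwz : v.w = v.z) (g : A) (t : Signature A) :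
    (v.deform g t).failure 5 = g ^ 2 * t.failure 5 := by
  simp only [failure, deform, traceCoeff, detCoeff, Matrix.cons_val, Fin.isValue, Fin.reduceEq,
    ↓reduceIte, hx, hy, hwz]
  ring

/-- If `Ĝ (Ĝ v)` is a multiple of `[1, 0, 0, 1]`, where failure of type `5` is a singular
condition, then one uses the leading quadratic part of the third equation. -/
theorem Solves.eq_of_scalar [ValuationRing R] (hv : v.Solves i j 5)
    (hx : v.gadget.gadget.x = 0) (hy : v.gadget.gadget.y = 0)
    (hwz : v.gadget.gadget.w = v.gadget.gadget.z)
    (hrigid : ∀ t, (v.map φ).IsTangent₂ i j t →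
      ((v.map φ).gadget.gadgetSlope 0 ((v.map φ).gadgetSlope 0 t)).failure 5 = 0 →
      ∃ c, t = (v.map φ).scale c)
    (h : v'.Solves i j 5) (hφ : v'.map φ = v.map φ)
    (hnorm : v'.w = 1 ∧ v.w = 1 ∨ v'.x = 1 ∧ v.x = 1) : v' = v := by
  refine eq_of_forall_deform hφ hnorm fun g t hg hφg hv' => ?_
  subst hv'
  refine hrigid _ (hv.isTangent₂ h hg hφg) ?_
  have h2 := h.2.2
  rw [gadget_deform, gadget_deform, failure_five_deform hx hy hwz, mul_eq_zero,
    or_iff_right (pow_ne_zero 2 hg)] at h2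
  rw [← hφg, gadget_map, gadgetSlope_map, gadgetSlope_map, failure_map, h2, map_zero, hφg]

/-- Solutions `v` of `Solves i j k`, with their types, for which `Ĝ (Ĝ v)` is a multiple of
`[1, 0, 0, 1]`. -/
def scalarSolutions : List (FailureType × FailureType × FailureType × Signature ℤ) :=
  [(3, 0, 5, ⟨1, -1, 1, 1⟩), (3, 6, 5, ⟨1, -1, 1, 1⟩), (3, 6, 5, ⟨1, 1, -1, 1⟩)]

theorem isRadial_of_mem_scalarSolutions (hF : (210 : F) ≠ 0) {i j k : FailureType}
    {e : Signature ℤ} (he : (i, j, k, e) ∈ scalarSolutions) {v t : Signature F}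
    (hv : v = e.map (Int.castRingHom F)) (ht : v.IsTangent₂ i j t)
    (h : (v.gadget.gadgetSlope 0 (v.gadgetSlope 0 t)).failure 5 = 0) : ∃ c, t = v.scale c := by
  have cancel (n : ℕ) [n.AtLeastTwo] {a b : F} (h : ofNat(n) * a = ofNat(n) * b)
      (hn : n ∣ 210 ^ 5 := by norm_num) : a = b := mul_left_cancel₀ (ofNat_ne_zero hF n hn) h
  have eq_of_sq_eq_zero {a b : F} (h : (48 * (a - b)) ^ 2 = 0) : a = b :=
    cancel 48 (by linear_combination pow_eq_zero_iff two_ne_zero |>.1 h)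
  simp only [scalarSolutions, List.mem_cons, List.not_mem_nil, or_false, Prod.mk.injEq] at he
  subst hv
  rcases he with ⟨rfl, rfl, rfl, rfl⟩ | ⟨rfl, rfl, rfl, rfl⟩ | ⟨rfl, rfl, rfl, rfl⟩
  all_goals
    obtain ⟨h1, h2⟩ := ht
    simp only [failure, failureSlope, gadgetSlope, gadget, map, traceCoeff, detCoeff,
      Matrix.cons_val, Fin.isValue, Fin.reduceEq, ↓reduceIte, eq_intCast, Int.cast_one,
      Int.cast_neg, Nat.cast_one, Nat.cast_ofNat, ne_eq, OfNat.ofNat_ne_zero, not_false_eq_true,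
      zero_pow, one_pow, even_two, Even.neg_pow, mul_zero, zero_mul, mul_one, one_mul,
      add_zero] at h h1 h2 ⊢
  · have hz : t.z = t.y - t.x - t.w := cancel 2 (by linear_combination h1)
    have hy : t.y = -2 * t.x - t.w := cancel 3 (by linear_combination h2)
    have hx : t.x = -t.w := eq_of_sq_eq_zero (by rw [hz, hy] at h; linear_combination h)
    exact ⟨t.w, by ext <;> simp only [hz, hy, hx, scale] <;> ring⟩
  · have hz : t.z = t.y - t.x - t.w := cancel 2 (by linear_combination h1)
    have hy : t.y = -2 * t.x - t.w := cancel 8 (by rw [hz] at h2; linear_combination -h2)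
    have hx : t.x = -t.w := eq_of_sq_eq_zero (by rw [hz, hy] at h; linear_combination h)
    exact ⟨t.w, by ext <;> simp only [hz, hy, hx, scale] <;> ring⟩
  · have hz : t.z = t.x - t.y - t.w := cancel 2 (by linear_combination h1)
    have hy : t.y = -2 * t.x + t.w := cancel 8 (by rw [hz] at h2; linear_combination -h2)
    have hx : t.x = t.w := eq_of_sq_eq_zero (by rw [hz, hy] at h; linear_combination h)
    exact ⟨t.w, by ext <;> simp only [hz, hy, hx, scale] <;> ring⟩

theorem solves_of_mem_solutions {k : FailureType} {e : Signature ℤ}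
    (he : (i, j, k, e) ∈ rigidSolutions ++ scalarSolutions) : e.Solves i j k := by
  simp only [rigidSolutions, scalarSolutions, List.mem_append, List.mem_cons, List.not_mem_nil,
    or_false, Prod.mk.injEq] at he
  rcases he with (⟨rfl, rfl, rfl, rfl⟩ | ⟨rfl, rfl, rfl, rfl⟩ | ⟨rfl, rfl, rfl, rfl⟩ |
    ⟨rfl, rfl, rfl, rfl⟩ | ⟨rfl, rfl, rfl, rfl⟩ | ⟨rfl, rfl, rfl, rfl⟩ | ⟨rfl, rfl, rfl, rfl⟩) |
    ⟨rfl, rfl, rfl, rfl⟩ | ⟨rfl, rfl, rfl, rfl⟩ | ⟨rfl, rfl, rfl, rfl⟩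
  all_goals simp [Solves, failure, traceCoeff, detCoeff]

theorem normalized_of_mem_solutions {k : FailureType} {e : Signature ℤ}
    (he : (i, j, k, e) ∈ rigidSolutions ++ scalarSolutions) : e.w = 1 ∨ e.w = 0 ∧ e.x = 1 := by
  have key : ∀ d ∈ rigidSolutions ++ scalarSolutions,
      d.2.2.2.w = 1 ∨ d.2.2.2.w = 0 ∧ d.2.2.2.x = 1 := by decide
  exact key _ he

theorem gadget_gadget_of_mem_scalarSolutions {k : FailureType} {e : Signature ℤ}
    (he : (i, j, k, e) ∈ scalarSolutions) : k = 5 ∧ e.gadget.gadget = ⟨16, 0, 0, 16⟩ := by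
  simp only [scalarSolutions, List.mem_cons, List.not_mem_nil, or_false, Prod.mk.injEq] at he
  rcases he with ⟨rfl, rfl, rfl, rfl⟩ | ⟨rfl, rfl, rfl, rfl⟩ | ⟨rfl, rfl, rfl, rfl⟩
  all_goals exact ⟨rfl, by ext <;> simp⟩

theorem Solves.eq_of_mem_solutions [ValuationRing R] (hF : (210 : F) ≠ 0) (hF' : (17 : F) ≠ 0)
    {k : FailureType} {e : Signature ℤ} (he : (i, j, k, e) ∈ rigidSolutions ++ scalarSolutions)
    (h : v.Solves i j k) (hφ : v.map φ = e.map (Int.castRingHom F))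
    (hnorm : v.w = 1 ∨ φ v.w = 0 ∧ v.x = 1) : v = e.map (Int.castRingHom R) := by
  have heφ : (e.map (Int.castRingHom R)).map φ = e.map (Int.castRingHom F) := by ext <;> simp
  have hew : φ v.w = e.w := by simpa using congrArg Signature.w hφ
  have hnorm' : v.w = 1 ∧ (e.map (Int.castRingHom R)).w = 1 ∨
      v.x = 1 ∧ (e.map (Int.castRingHom R)).x = 1 := by
    rcases hnorm with hw | ⟨hw, hx⟩ <;>
    rcases normalized_of_mem_solutions he with hw' | ⟨hw', hx'⟩ <;> simp_all
  have hsol := (solves_of_mem_solutions he).map (Int.castRingHom R)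
  rcases List.mem_append.1 he with he | he
  · exact hsol.eq_of_isRigid (heφ ▸ isRigid_of_mem_rigidSolutions hF hF' he) h (hφ.trans heφ.symm)
      hnorm'
  · obtain ⟨rfl, hg⟩ := gadget_gadget_of_mem_scalarSolutions he
    refine hsol.eq_of_scalar ?_ ?_ ?_ (fun t => isRadial_of_mem_scalarSolutions hF he heφ) h
      (hφ.trans heφ.symm) hnorm' <;> simp [gadget_map, hg]

end Scalar

section Identity

variable {R F : Type*} [CommRing R] [Field F] {φ : R →+* F} {v : Signature R}

/-- Near `[1, 0, 0, 1]` put `x = g² ξ`, `y = g⁴ η`, `z - w = g³ δ`, which makes the type `5`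
failure `(z - w)² + 4 x y` homogeneous. This form is preserved by `Ĝ`. -/
theorem exists_gadget_eq_blowup {g w : R} (hg : φ g = 0) (hw : φ w = 1) (ξ η δ : R) :
    ∃ w' ξ' η' δ', (⟨w, g ^ 2 * ξ, g ^ 4 * η, w + g ^ 3 * δ⟩ : Signature R).gadget =
        ⟨w', g ^ 2 * ξ', g ^ 4 * η', w' + g ^ 3 * δ'⟩ ∧
      φ w' = 1 ∧ φ ξ' = φ ξ ∧ φ η' = φ ξ ^ 2 + φ η ∧ φ δ' = 3 * φ δ := by
  refine ⟨w ^ 3 + 2 * (g ^ 2 * ξ) ^ 3 + (g ^ 4 * η) ^ 3,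
    w ^ 2 * ξ + 2 * g ^ 6 * ξ ^ 2 * η + g ^ 6 * η ^ 2 * (w + g ^ 3 * δ),
    w * ξ ^ 2 + 2 * g ^ 6 * ξ * η ^ 2 + η * (w + g ^ 3 * δ) ^ 2,
    3 * w ^ 2 * δ + 3 * w * δ ^ 2 * g ^ 3 + g ^ 6 * δ ^ 3 - g ^ 3 * ξ ^ 3 + g ^ 9 * η ^ 3,
    ?_, ?_, ?_, ?_, ?_⟩
  · ext <;> simp only [gadget] <;> ring
  all_goals simp [hg, hw, map_ofNat φ]

theorem failure_five_blowup (g w ξ η δ : R) :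
    (⟨w, g ^ 2 * ξ, g ^ 4 * η, w + g ^ 3 * δ⟩ : Signature R).failure 5 =
      g ^ 6 * (δ ^ 2 + 4 * (ξ * η)) := by
  simp only [failure, traceCoeff, detCoeff, Matrix.cons_val, Fin.isValue, Fin.reduceEq, ↓reduceIte]
  push_cast
  ring

/-- The signature with its two domain elements exchanged. -/
@[simps]
def reverse (v : Signature R) : Signature R := ⟨v.z, v.y, v.x, v.w⟩

theorem gadget_reverse (v : Signature R) : v.reverse.gadget = v.gadget.reverse := by
  ext <;> simp <;> ring

theorem failure_reverse {j : FailureType} (hj : j ≠ 0) (v : Signature R) :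
    v.reverse.failure j = v.failure j := by
  simp only [failure, hj, if_false, reverse]
  ring

variable [IsDomain R]

theorem failure_gadget_gadget_blowup_ne_zero (hF : (210 : F) ≠ 0) {g w ξ : R} (hg0 : g ≠ 0)
    (hg : φ g = 0) (hw : φ w = 1) (hξ : φ ξ = -8) :
    (gadget ⟨w, g ^ 2 * ξ, g ^ 4 * -ξ, w + g ^ 3 * (2 * ξ)⟩).gadget.failure 5 ≠ 0 := by
  intro h
  obtain ⟨w₁, ξ₁, η₁, δ₁, h₁, hw₁, hξ₁, hη₁, hδ₁⟩ :=
    exists_gadget_eq_blowup hg hw ξ (-ξ) (2 * ξ)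
  obtain ⟨w₂, ξ₂, η₂, δ₂, h₂, -, hξ₂, hη₂, hδ₂⟩ := exists_gadget_eq_blowup hg hw₁ ξ₁ η₁ δ₁
  rw [h₁, h₂, failure_five_blowup, mul_eq_zero, or_iff_right (pow_ne_zero 6 hg0)] at h
  have hφ : φ δ₂ ^ 2 + 4 * (φ ξ₂ * φ η₂) = 0 := by simpa [map_ofNat φ] using congrArg φ h
  rw [hδ₂, hη₂, hξ₂, hδ₁, hη₁, hξ₁, map_neg, map_mul, map_ofNat φ, hξ] at hφ
  exact pow_ne_zero 14 (ofNat_ne_zero hF 2) (by linear_combination hφ)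

theorem exists_leading_equation {w x h : R} (hw : φ w = 1) (hφx : φ x = 0) (hx : x ≠ 0)
    (hfail : (gadget ⟨w, x, x * -h ^ 2, w + 2 * x * h⟩).failure 5 = 0) :
    ∃ m n, φ m = 32 ∧ φ n = 4 ∧ h ^ 2 * m + x * n = 0 := by
  simp only [failure, gadget, traceCoeff, detCoeff, Matrix.cons_val, Fin.isValue, Fin.reduceEq,
    ↓reduceIte] at hfail
  push_cast at hfail
  let α := 2 * (3 * w ^ 2 + 6 * w * x * h + 4 * x ^ 2 * h ^ 2) - x ^ 2 * h ^ 5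
  let γ := w ^ 2 - 2 * x ^ 2 * h ^ 2 + x * h ^ 4 * (w + 2 * x * h)
  refine ⟨α ^ 2 - 4 * γ * (w + 2 * x * h) ^ 2,
    4 * γ * (w + 2 * x * h ^ 4) - 2 * h * α * x + x ^ 3, ?_, ?_, ?_⟩
  · simp only [α, γ, map_sub, map_add, map_mul, map_pow, map_ofNat φ, hw, hφx]
    ring
  · simp only [α, γ, map_sub, map_add, map_mul, map_pow, map_ofNat φ, hw, hφx]
    ring
  · refine mul_left_cancel₀ (pow_ne_zero 2 hx) ?_
    linear_combination hfail

/-- Type `5` for `v` gives `y = -h² x`, `z = w + 2 h x`; then type `5` for `Ĝ v`, divided by `x²`,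
has the leading part `4 x + 32 h²`. -/
theorem exists_eq_blowup_of_dvd [IsLocalHom φ] (hF : (210 : F) ≠ 0) (h0 : v.failure 5 = 0)
    (h1 : v.gadget.failure 5 = 0) (hφ : v.map φ = ⟨1, 0, 0, 1⟩) (hx : v.x ≠ 0) (hxy : v.x ∣ v.y)
    (hxzw : v.x ∣ v.z - v.w) :
    ∃ g ξ, φ g = 0 ∧ φ ξ = -8 ∧ v = ⟨v.w, g ^ 2 * ξ, g ^ 4 * -ξ, v.w + g ^ 3 * (2 * ξ)⟩ := by
  have exists_inv {n : ℕ} {a : R} (ha : φ a = n) (hn : (n : F) ≠ 0) : ∃ b, a * b = 1 :=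
    (isUnit_of_map_unit φ a (by simpa only [ha, isUnit_iff_ne_zero] using hn)).exists_right_inv
  obtain ⟨w, x, y, z⟩ := v
  obtain ⟨b, rfl : y = x * b⟩ := hxy
  obtain ⟨d, hd : z - w = x * d⟩ := hxzw
  obtain ⟨u, hu⟩ := exists_inv (map_ofNat φ 2) (ofNat_ne_zero hF 2)
  obtain ⟨h, rfl⟩ : ∃ h, d = 2 * h := ⟨u * d, by linear_combination -d * hu⟩
  obtain rfl : z = w + 2 * x * h := by linear_combination hd
  simp only [Signature.map, Signature.mk.injEq] at hφ
  obtain ⟨hw, hφx, -, -⟩ := hφ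
  simp only [failure, traceCoeff, detCoeff, Matrix.cons_val, Fin.isValue, Fin.reduceEq,
    ↓reduceIte] at h0
  push_cast at h0
  obtain rfl : b = -h ^ 2 := mul_left_cancel₀ (pow_ne_zero 2 hx) <| by
    linear_combination u ^ 2 * h0 - (2 * u + 1) * x ^ 2 * (b + h ^ 2) * hu
  obtain ⟨m, n, hm, hn, hmn⟩ := exists_leading_equation hw hφx hx h1
  obtain ⟨n', hn'⟩ := exists_inv (n := 4) (mod_cast hn) (ofNat_ne_zero hF 4)
  have hφn' : 4 * φ n' = 1 := by rw [← hn, ← map_mul, hn', map_one]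
  refine ⟨h, -(m * n'), ?_, ?_, ?_⟩
  · have : φ h ^ 2 * 32 = 0 := by simpa [hm, hφx] using congrArg φ hmn
    simpa [ofNat_ne_zero hF 32] using this
  · rw [map_neg, map_mul, hm]
    linear_combination -8 * hφn'
  · obtain rfl : x = h ^ 2 * -(m * n') := by linear_combination n' * hmn - x * hn'
    ext <;> ring

variable [ValuationRing R] [IsLocalHom φ]

theorem not_solves_five_of_map_eq_identity (hF : (210 : F) ≠ 0) {v : Signature R}
    (hφ : v.map φ = ⟨1, 0, 0, 1⟩) (hx : v.x ≠ 0) (hy : v.y ≠ 0) : ¬v.Solves 5 5 5 := by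
  intro h
  wlog hxy : v.x ∣ v.y generalizing v
  · refine this (v := v.reverse) ?_ hy hx ?_ ((ValuationRing.dvd_total v.x v.y).resolve_left hxy)
    · simp_all [Signature.map]
    · simpa [Solves, gadget_reverse, failure_reverse] using h
  obtain ⟨h0, h1, h2⟩ := h
  have hxzw : v.x ∣ v.z - v.w := by
    obtain ⟨b, hb⟩ := hxy
    rw [← IsIntegrallyClosed.pow_dvd_pow_iff two_ne_zero]
    refine ⟨-4 * b, ?_⟩
    simp only [failure, traceCoeff, detCoeff, Matrix.cons_val, Fin.isValue, Fin.reduceEq,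
      ↓reduceIte, hb] at h0
    push_cast at h0
    linear_combination h0
  obtain ⟨g, ξ, hg, hξ, hv⟩ := exists_eq_blowup_of_dvd hF h0 h1 hφ hx hxy hxzw
  have hg0 : g ≠ 0 := by
    rintro rfl
    rw [hv] at hx
    simp at hx
  refine failure_gadget_gadget_blowup_ne_zero hF hg0 hg ?_ hξ (hv ▸ h2)
  simpa using congrArg Signature.w hφ

end Identity

end Signature

/-! ### Exhaustive search over residues -/

/-- The application `f n`, written as a recursion on `n` so that the kernel evaluates `n` to a
literal before substituting it. -/
def forceNat (n : ℕ) (f : ℕ → Bool) : Bool := Nat.rec (f 0) (fun m _ => f (m + 1)) n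

theorem forceNat_eq (n : ℕ) (f : ℕ → Bool) : forceNat n f = f n := by cases n <;> rfl

namespace Signature

/-- The signature modulo `l` represented by `n`. -/
abbrev residue (l : ℕ) (n : Signature ℕ) : Signature (ZMod l) := n.map (Nat.castRingHom (ZMod l))

/-- The application `f n`, with the coordinates of `n` evaluated first. -/
def force (f : Signature ℕ → Bool) : Signature ℕ → Bool
  | ⟨w, x, y, z⟩ =>
    forceNat w fun w' => forceNat x fun x' => forceNat y fun y' => forceNat z fun z' =>
      f ⟨w', x', y', z'⟩

/-- A representative of `Ĝ n` modulo `l`. -/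
def gadgetMod (l : ℕ) : Signature ℕ → Signature ℕ
  | ⟨w, x, y, z⟩ =>
    ⟨(w * w * w + 2 * (x * x * x) + y * y * y) % l, (w * w * x + 2 * (x * x * y) + y * y * z) % l,
      (w * x * x + 2 * (x * y * y) + y * z * z) % l, (x * x * x + 2 * (y * y * y) + z * z * z) % l⟩

/-- Decides whether `failure j` vanishes on the residue of `n`. -/
def failsMod (l : ℕ) (j : FailureType) : Signature ℕ → Bool
  | ⟨w, x, y, z⟩ =>
    bif j == 0 then w % l == 0
    else (traceCoeff j * ((w + z) * (w + z)) + detCoeff j * (x * y)) % l == detCoeff j * (w * z) % l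

/-- Decides whether `G₁` fails with type `j` on `Ĝ n` and with type `k` on `Ĝ (Ĝ n)`
modulo `l`. -/
def gadgetsFailMod (l : ℕ) (j k : FailureType) (n : Signature ℕ) : Bool :=
  force (fun n' => failsMod l j n' && force (failsMod l k) (gadgetMod l n')) (gadgetMod l n)

variable {l : ℕ}

theorem force_eq (f : Signature ℕ → Bool) (n : Signature ℕ) : force f n = f n := by
  simp only [force, forceNat_eq]

theorem residue_gadgetMod (n : Signature ℕ) : (gadgetMod l n).residue l = (n.residue l).gadget := by
  ext <;> simp [gadgetMod] <;> ring

theorem failsMod_eq_true_iff (j : FailureType) (n : Signature ℕ) :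
    failsMod l j n = true ↔ (n.residue l).failure j = 0 := by
  by_cases hj : j = 0
  · simp [failsMod, failure, hj, ZMod.natCast_eq_zero_iff, Nat.dvd_iff_mod_eq_zero]
  · simp only [failsMod, failure, hj, beq_eq_false_iff_ne.2 hj, cond_false, if_false, beq_iff_eq,
      ← ZMod.natCast_eq_natCast_iff', residue, map]
    push_cast
    rw [← sub_eq_zero]
    constructor <;> intro h <;> linear_combination h

theorem gadgetsFailMod_eq_true_iff (j k : FailureType) (n : Signature ℕ) :
    gadgetsFailMod l j k n = true ↔
      (n.residue l).gadget.failure j = 0 ∧ (n.residue l).gadget.gadget.failure k = 0 := by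
  simp only [gadgetsFailMod, force_eq, Bool.and_eq_true, failsMod_eq_true_iff, residue_gadgetMod]

end Signature

namespace Rotated

/-- The point modulo `l` represented by `n`. -/
abbrev residue (l : ℕ) (n : Rotated ℕ) : Rotated (ZMod l) := n.map (Nat.castRingHom (ZMod l))

/-- The application `f n`, with the coordinates of `n` evaluated first. -/
def force (f : Rotated ℕ → Bool) : Rotated ℕ → Bool
  | ⟨p, q, r, s⟩ =>
    forceNat p fun p' => forceNat q fun q' => forceNat r fun r' => forceNat s fun s' =>
      f ⟨p', q', r', s'⟩

/-- A representative of `gadget 0 n` modulo `l`. -/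
def gadgetMod (l : ℕ) : Rotated ℕ → Rotated ℕ
  | ⟨p, q, r, s⟩ =>
    ⟨(3 * (p * r * r) + 6 * (q * q * r)) % l,
      (5 * (q * r * r) + 2 * (q * q * s) + 2 * (p * r * s)) % l,
      (2 * (r * r * r) + 6 * (q * r * s) + p * s * s) % l,
      (6 * (r * r * s) + 3 * (q * s * s)) % l⟩

/-- Decides whether `failure j 0` vanishes on the residue of `n`. -/
def failsMod (l : ℕ) (j : FailureType) : Rotated ℕ → Bool
  | ⟨_, q, r, s⟩ =>
    bif j == 0 then s % l == 0
    else (traceCoeff j * (9 * (r * r)) + 2 * detCoeff j * (q * s)) % l ==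
      2 * detCoeff j * (r * r) % l

/-- The analogue of `Signature.gadgetsFailMod` in rotated coordinates of weight `0`. -/
def gadgetsFailMod (l : ℕ) (j k : FailureType) (n : Rotated ℕ) : Bool :=
  force (fun n' => failsMod l j n' && force (failsMod l k) (gadgetMod l n')) (gadgetMod l n)

variable {l : ℕ}

theorem force_eq (f : Rotated ℕ → Bool) (n : Rotated ℕ) : force f n = f n := by
  simp only [force, forceNat_eq]

theorem residue_gadgetMod (n : Rotated ℕ) : (gadgetMod l n).residue l = (n.residue l).gadget 0 := by
  ext <;> simp [gadgetMod] <;> ring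

theorem failsMod_eq_true_iff (j : FailureType) (n : Rotated ℕ) :
    failsMod l j n = true ↔ (n.residue l).failure j 0 = 0 := by
  by_cases hj : j = 0
  · simp [failsMod, failure, hj, ZMod.natCast_eq_zero_iff, Nat.dvd_iff_mod_eq_zero]
  · simp only [failsMod, failure, hj, beq_eq_false_iff_ne.2 hj, cond_false, if_false, beq_iff_eq,
      ← ZMod.natCast_eq_natCast_iff', residue, map]
    push_cast
    rw [← sub_eq_zero]
    constructor <;> intro h <;> linear_combination h

theorem gadgetsFailMod_eq_true_iff (j k : FailureType) (n : Rotated ℕ) :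
    gadgetsFailMod l j k n = true ↔ ((n.residue l).gadget 0).failure j 0 = 0 ∧
      (((n.residue l).gadget 0).gadget 0).failure k 0 = 0 := by
  simp only [gadgetsFailMod, force_eq, Bool.and_eq_true, failsMod_eq_true_iff, residue_gadgetMod]

end Rotated

section Search

/-- Representatives of the solutions `y` of `a * y = c` modulo the prime `l`. -/
def linearSolutions (l a c : ℕ) : List ℕ :=
  bif a % l == 0 then (bif c % l == 0 then List.range l else []) else [a ^ (l - 2) * c % l]

/-- Checks `f` on representatives of all solutions of `failure i v = 0` modulo `l` of the form
`[1, x, y, z]` or `[0, 1, y, z]`. -/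
def allFailingMod (l : ℕ) (i : FailureType) (f : Signature ℕ → Bool) : Bool :=
  (List.range l).all fun z =>
    ((List.range l).all fun x =>
      (linearSolutions l (detCoeff i * x) (detCoeff i * z + (l - 1) * ((1 + z) * (1 + z)))).all
        fun y => f ⟨1, x, y, z⟩) &&
    (linearSolutions l (detCoeff i) ((l - 1) * (z * z))).all fun y => f ⟨0, 1, y, z⟩

/-- Equality of signatures is decided coordinatewise. -/
instance {A : Type*} [DecidableEq A] : DecidableEq (Signature A) :=
  fun _ _ => decidable_of_iff _ Signature.ext_iff.symm

/-- A residue near which the solutions of type `i, j, k` are known: it lies on the invariant line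
up to a twist, reduces one of the listed solutions, or is `[1, 0, 0, 1]`. -/
def IsKnownResidue {F : Type*} [CommRing F] (i j k : FailureType) (v : Signature F) : Prop :=
  (v.w = 1 ∧ v.z = -1 ∧ v.x * v.y = -1 ∧ (v.x ^ 3 = 1 ∨ v.x ^ 3 = -1)) ∨
    (∃ d ∈ Signature.rigidSolutions ++ Signature.scalarSolutions,
      d = (i, j, k, d.2.2.2) ∧ v = d.2.2.2.map (Int.castRingHom F)) ∨
    (i = 5 ∧ j = 5 ∧ k = 5 ∧ v = ⟨1, 0, 0, 1⟩)

instance {F : Type*} [CommRing F] [DecidableEq F] (i j k : FailureType) (v : Signature F) :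
    Decidable (IsKnownResidue i j k v) :=
  inferInstanceAs (Decidable (_ ∨ _ ∨ _))

/-- Decides that `G₁` cannot fail with types `i, j, k` in characteristic `l` except at known
residues. -/
def checkResidues (l : ℕ) (i j k : FailureType) : Bool :=
  allFailingMod l i fun n => !n.gadgetsFailMod l j k || decide (IsKnownResidue i j k (n.residue l))

/-- Decides `Rotated.NoLimitAtBase (ZMod l) i j k`. -/
def checkBase (l : ℕ) (i j k : FailureType) : Bool :=
  (List.range l).all fun p =>
    (linearSolutions l (2 * detCoeff i) (2 * detCoeff i + (l - 1) * 9)).all fun q =>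
      !Rotated.gadgetsFailMod l j k ⟨p, q, 1, 1⟩ || i == 4 && k == 0 && j != 0 && p == 1

/-- Decides `Rotated.NoLimitOnCusp (ZMod l) j k`. -/
def checkCusp (l : ℕ) (j k : FailureType) : Bool :=
  (List.range l).all fun q => q == 0 || !Rotated.gadgetsFailMod l j k ⟨(l - 1) * (3 * q), q, 0, 1⟩

/-- Decides the last condition of `Nondegenerate (ZMod l) i j k`. -/
def checkPreimage (l : ℕ) (i j : FailureType) : Bool :=
  j == 0 || 9 * detCoeff i * traceCoeff j % l != 2 * detCoeff j % l

/-- Decides that the search modulo `l` settles the types `i, j, k`. -/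
def check (l : ℕ) (i j k : FailureType) : Bool :=
  (bif i == 1 then checkCusp l j k else checkPreimage l i j && checkBase l i j k) &&
    checkResidues l i j k

/-- Moduli, found by experiment, which together settle all types. -/
def primes : List ℕ := [13, 11, 19, 23, 29, 37, 61, 71, 83, 113]

variable {l : ℕ} [Fact l.Prime] {i j k : FailureType}

theorem exists_mem_linearSolutions {a c : ℕ} {y : ZMod l} (h : (a : ZMod l) * y = c) :
    ∃ n ∈ linearSolutions l a c, (n : ZMod l) = y := by
  simp only [linearSolutions, Bool.cond_eq_ite, beq_iff_eq, ← Nat.dvd_iff_mod_eq_zero,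
    ← ZMod.natCast_eq_zero_iff]
  by_cases ha : (a : ZMod l) = 0
  · have hc : (c : ZMod l) = 0 := by rw [← h, ha, zero_mul]
    exact ⟨y.val, by simp [ha, hc, ZMod.val_lt], ZMod.natCast_zmod_val y⟩
  · refine ⟨_, by rw [if_neg ha]; exact List.mem_singleton_self _, ?_⟩
    have hl : l - 2 + 1 = l - 1 := by have := (Fact.out : l.Prime).two_le; omega
    rw [ZMod.natCast_mod, Nat.cast_mul, Nat.cast_pow, ← h, ← mul_assoc, ← pow_succ, hl,
      ZMod.pow_card_sub_one_eq_one ha, one_mul]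

theorem natCast_sub_one_eq_neg_one : ((l - 1 : ℕ) : ZMod l) = -1 := by
  rw [Nat.cast_pred (Fact.out : l.Prime).pos, CharP.cast_eq_zero, zero_sub]

theorem exists_residue_eq_of_allFailingMod (hi0 : i ≠ 0) (hi6 : i ≠ 6) {f : Signature ℕ → Bool}
    (hf : allFailingMod l i f = true) {v : Signature (ZMod l)} (hv : v.failure i = 0)
    (hnorm : v.w = 1 ∨ v.w = 0 ∧ v.x = 1) : ∃ n, n.residue l = v ∧ f n = true := by
  obtain ⟨w, x, y, z⟩ := v
  simp only [allFailingMod, List.all_eq_true, List.mem_range, Bool.and_eq_true] at hf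
  obtain ⟨hf1, hf0⟩ := hf z.val z.val_lt
  simp only [Signature.failure, hi0, if_false, traceCoeff_eq_one hi6, Nat.cast_one,
    one_mul] at hv
  obtain rfl | ⟨rfl, rfl⟩ := hnorm
  · obtain ⟨n, hn, rfl⟩ := exists_mem_linearSolutions (l := l) (a := detCoeff i * x.val)
      (c := detCoeff i * z.val + (l - 1) * ((1 + z.val) * (1 + z.val))) (y := y) (by
        push_cast [natCast_sub_one_eq_neg_one, ZMod.natCast_zmod_val]
        linear_combination hv)
    exact ⟨_, by ext <;> simp, hf1 x.val x.val_lt n hn⟩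
  · obtain ⟨n, hn, rfl⟩ := exists_mem_linearSolutions (l := l) (a := detCoeff i)
      (c := (l - 1) * (z.val * z.val)) (y := y) (by
        push_cast [natCast_sub_one_eq_neg_one, ZMod.natCast_zmod_val]
        linear_combination hv)
    exact ⟨_, by ext <;> simp, hf0 n hn⟩

theorem isKnownResidue_of_checkResidues (hi0 : i ≠ 0) (hi6 : i ≠ 6)
    (h : checkResidues l i j k = true) {v : Signature (ZMod l)} (hv : v.Solves i j k)
    (hnorm : v.w = 1 ∨ v.w = 0 ∧ v.x = 1) : IsKnownResidue i j k v := by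
  obtain ⟨n, rfl, hn⟩ := exists_residue_eq_of_allFailingMod hi0 hi6 h hv.1 hnorm
  simpa [(Signature.gadgetsFailMod_eq_true_iff j k n).2 hv.2] using hn

theorem noLimitAtBase_of_checkBase (hi0 : i ≠ 0) (hi6 : i ≠ 6) (h : checkBase l i j k = true) :
    Rotated.NoLimitAtBase (ZMod l) i j k := by
  intro P Q hPQ
  simp only [checkBase, List.all_eq_true, List.mem_range] at h
  obtain ⟨n, hn, rfl⟩ := exists_mem_linearSolutions (l := l) (a := 2 * detCoeff i)
    (c := 2 * detCoeff i + (l - 1) * 9) (y := Q) (by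
      have h0 := hPQ.1
      simp only [Rotated.failure, hi0, if_false, traceCoeff_eq_one hi6] at h0
      push_cast [natCast_sub_one_eq_neg_one] at h0 ⊢
      linear_combination h0)
  have hfail := (Rotated.gadgetsFailMod_eq_true_iff (l := l) j k ⟨P.val, n, 1, 1⟩).2
    (by simpa [Rotated.map] using hPQ.2)
  obtain ⟨hi, hk, hj, hP⟩ : i = 4 ∧ k = 0 ∧ j ≠ 0 ∧ P.val = 1 := by
    simpa [hfail, and_assoc] using h P.val P.val_lt n hn
  exact ⟨hi, hk, hj, by rw [← ZMod.natCast_zmod_val P, hP, Nat.cast_one]⟩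

theorem noLimitOnCusp_of_checkCusp (h : checkCusp l j k = true) :
    Rotated.NoLimitOnCusp (ZMod l) j k := by
  intro Q hQ hsol
  simp only [checkCusp, List.all_eq_true, List.mem_range] at h
  have hfail := (Rotated.gadgetsFailMod_eq_true_iff (l := l) j k
    ⟨(l - 1) * (3 * Q.val), Q.val, 0, 1⟩).2
      (by simpa [Rotated.map, natCast_sub_one_eq_neg_one] using hsol.2)
  simpa [hfail, hQ] using h Q.val Q.val_lt

theorem nondegenerate_of_check (hF : (210 : ZMod l) ≠ 0) (hi0 : i ≠ 0) (hi6 : i ≠ 6)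
    (hij : ¬(i = 1 ∧ j = 1)) (h : check l i j k = true) : Nondegenerate (ZMod l) i j k where
  char_ne := hF
  ne_zero := hi0
  ne_six := hi6
  not_one_one := hij
  base hi := by
    simp only [check, beq_eq_false_iff_ne.2 hi, cond_false, Bool.and_eq_true] at h
    exact noLimitAtBase_of_checkBase hi0 hi6 h.1.2
  cusp hi := by
    simp only [check, beq_iff_eq.2 hi, cond_true, Bool.and_eq_true] at h
    exact noLimitOnCusp_of_checkCusp h.1
  preimage hi hj := by
    simp only [check, checkPreimage, beq_eq_false_iff_ne.2 hi, beq_eq_false_iff_ne.2 hj,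
      cond_false, Bool.false_or, Bool.and_eq_true, bne_iff_ne, ne_eq,
      ← ZMod.natCast_eq_natCast_iff'] at h
    push_cast at h
    exact sub_ne_zero.2 h.1.1

theorem isKnownResidue_of_check (hi0 : i ≠ 0) (hi6 : i ≠ 6) (h : check l i j k = true)
    {v : Signature (ZMod l)} (hv : v.Solves i j k) (hnorm : v.w = 1 ∨ v.w = 0 ∧ v.x = 1) :
    IsKnownResidue i j k v :=
  isKnownResidue_of_checkResidues hi0 hi6 (Bool.and_eq_true _ _ ▸ h).2 hv hnorm

end Search

theorem exists_check : ∀ i j k : FailureType, i ≠ 0 → i ≠ 6 → ¬(i = 1 ∧ j = 1) →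
    ∃ l ∈ primes, check l i j k = true := by
  decide +kernel

section CubeRoots

open Polynomial IsLocalRing

theorem exists_pow_three_eq_one_map_eq {R F : Type*} [CommRing R] [IsLocalRing R]
    [HenselianRing R (maximalIdeal R)] [Field F] {φ : R →+* F} [IsLocalHom φ]
    (hφ : Function.Surjective φ) (h3 : (3 : F) ≠ 0) {o : F} (ho : o ^ 3 = 1) :
    ∃ ω : R, ω ^ 3 = 1 ∧ φ ω = o := by
  have mem_iff {a : R} : a ∈ maximalIdeal R ↔ φ a = 0 := by
    rw [mem_maximalIdeal, mem_nonunits_iff, ← isUnit_map_iff φ, isUnit_iff_ne_zero, not_not]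
  obtain ⟨a, rfl⟩ := hφ o
  have ha : φ a ≠ 0 := by rintro h; simp [h] at ho
  have hmonic : (X ^ 3 - 1 : R[X]).Monic := monic_X_pow_sub_C 1 three_ne_zero
  have hderiv : IsUnit ((X ^ 3 - 1 : R[X]).derivative.eval a) :=
    isUnit_of_map_unit φ _ <| isUnit_iff_ne_zero.2 <| by
      simpa [map_ofNat φ, two_add_one_eq_three, h3] using ha
  obtain ⟨ω, hω, hωa⟩ := HenselianRing.is_henselian (X ^ 3 - 1 : R[X]) hmonic a
    (mem_iff.2 (by simp [ho])) (hderiv.map (Ideal.Quotient.mk (maximalIdeal R)))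
  exact ⟨ω, by simpa [sub_eq_zero] using hω, by simpa [mem_iff, sub_eq_zero] using hωa⟩

end CubeRoots

namespace Signature

/-- The solutions found by the search, up to a scalar: the invariant line and two points. -/
def IsExceptional {A : Type*} [CommRing A] (v : Signature A) : Prop :=
  v.OnInvariantLine ∨ (v.x = -v.w ∧ v.y = v.w ∧ v.z = v.w) ∨
    (v.x = v.w ∧ v.y = -v.w ∧ v.z = v.w)

section IsExceptional

variable {A B : Type*} [CommRing A] [CommRing B] {v : Signature A}

theorem isExceptional_scale_iff [IsDomain A] {g : A} (hg : g ≠ 0) :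
    (v.scale g).IsExceptional ↔ v.IsExceptional := by
  simp only [IsExceptional, OnInvariantLine, scale, mul_pow, ← mul_add, ← mul_neg, mul_eq_zero,
    mul_right_inj' hg, pow_ne_zero 3 hg, hg, false_or]

theorem isExceptional_map_iff {φ : A →+* B} (hφ : Function.Injective φ) :
    (v.map φ).IsExceptional ↔ v.IsExceptional := by
  simp only [IsExceptional, OnInvariantLine, map, ← map_pow, ← map_add, ← map_neg,
    map_eq_zero_iff φ hφ, hφ.eq_iff]

theorem Solves.onInvariantLine_of_one_one [IsDomain A] {k : FailureType} (h3 : (3 : A) ≠ 0)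
    (h : v.Solves 1 1 k) : v.OnInvariantLine := by
  obtain ⟨h0, h1, -⟩ := h
  have hwz : v.w + v.z = 0 := by simpa [failure, traceCoeff, detCoeff] using h0
  have htr : v.gadget.w + v.gadget.z = 0 := by
    simpa only [failure, traceCoeff, detCoeff, Matrix.cons_val, Fin.isValue, one_ne_zero,
      if_false, Nat.cast_one, Nat.cast_zero, one_mul, zero_mul, add_zero, sq_eq_zero_iff] using h1
  refine ⟨hwz, mul_left_cancel₀ h3 ?_⟩
  rw [gadget_w, gadget_z] at htr
  linear_combination htr - (v.w ^ 2 - v.w * v.z + v.z ^ 2) * hwz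

end IsExceptional

section Local

variable {R F : Type*} [CommRing R] [Field F] {φ : R →+* F} {i j k : FailureType}

theorem Solves.eq_zero_of_w_eq_zero_of_x_eq_zero (hF : (210 : F) ≠ 0) (hi0 : i ≠ 0) (hi6 : i ≠ 6)
    {y z : F} (h : (⟨0, 0, y, z⟩ : Signature F).Solves i j k) : y = 0 ∧ z = 0 := by
  obtain ⟨h0, h1, -⟩ := h
  obtain rfl : z = 0 := by simpa [failure, hi0, traceCoeff_eq_one hi6] using h0
  refine ⟨?_, rfl⟩
  by_cases hj : j = 0
  · simpa [failure, hj] using h1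
  · simp only [failure, hj, if_false, gadget] at h1
    have : (9 * traceCoeff j - 2 * detCoeff j : F) * y ^ 6 = 0 := by linear_combination h1
    simpa [nine_mul_traceCoeff_sub_ne_zero hF hj] using this

variable [IsDomain R] [ValuationRing R] [IsLocalHom φ] {v : Signature R}

theorem Solves.exists_eq_scale_normalized (h : v.Solves i j k) (hF : (210 : F) ≠ 0)
    (hi0 : i ≠ 0) (hi6 : i ≠ 6) (hw : v.w ≠ 0) :
    ∃ g ≠ 0, ∃ u : Signature R, v = u.scale g ∧ (u.w = 1 ∨ φ u.w = 0 ∧ u.x = 1) := by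
  obtain ⟨g, hg, f, hf, n, hn⟩ := exists_eq_mul_of_ne_zero (f := ![v.w, v.x, v.y, v.z])
    fun h0 => hw (congrFun h0 0)
  set u : Signature R := ⟨f 0, f 1, f 2, f 3⟩
  have hv : v = u.scale g := Signature.ext (hf 0) (hf 1) (hf 2) (hf 3)
  have hres : ¬(φ u.w = 0 ∧ φ u.x = 0) := by
    rintro ⟨hw, hx⟩
    have hsol : (u.map φ).Solves i j k := ((hv ▸ h).of_scale hg).map φ
    rw [show u.map φ = ⟨0, 0, φ u.y, φ u.z⟩ from Signature.ext hw hx rfl rfl] at hsol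
    obtain ⟨hy, hz⟩ := hsol.eq_zero_of_w_eq_zero_of_x_eq_zero hF hi0 hi6
    have hfn : φ (f n) = 0 := by fin_cases n <;> assumption
    simp [hn] at hfn
  have rescale {t s : R} (hts : t * s = 1) : g * t ≠ 0 ∧ v = (u.scale s).scale (g * t) := by
    have hmul (a : R) : g * t * (s * a) = g * a := by linear_combination g * a * hts
    refine ⟨mul_ne_zero hg (left_ne_zero_of_mul_eq_one hts), ?_⟩
    rw [hv]
    exact Signature.ext (hmul _).symm (hmul _).symm (hmul _).symm (hmul _).symm
  by_cases hw : φ u.w = 0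
  · obtain ⟨s, hs⟩ := (isUnit_of_map_unit φ u.x
      (isUnit_iff_ne_zero.2 fun hx => hres ⟨hw, hx⟩)).exists_right_inv
    exact ⟨_, (rescale hs).1, _, (rescale hs).2, Or.inr ⟨by simp [hw], (mul_comm s u.x).trans hs⟩⟩
  · obtain ⟨s, hs⟩ := (isUnit_of_map_unit φ u.w (isUnit_iff_ne_zero.2 hw)).exists_right_inv
    exact ⟨_, (rescale hs).1, _, (rescale hs).2, Or.inl ((mul_comm s u.w).trans hs)⟩

theorem eq_of_mem_solutions_of_mul_ne_zero : ∀ d ∈ rigidSolutions ++ scalarSolutions,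
    d.2.2.2.w * d.2.2.2.x * d.2.2.2.y * d.2.2.2.z ≠ 0 →
      d.2.2.2 = ⟨1, -1, 1, 1⟩ ∨ d.2.2.2 = ⟨1, 1, -1, 1⟩ := by
  decide

theorem Solves.isExceptional_of_isKnownResidue (h : v.Solves i j k) (hF : Nondegenerate F i j k)
    (hF' : (17 : F) ≠ 0) (hω : ∀ o : F, o ^ 3 = 1 → ∃ ω : R, ω ^ 3 = 1 ∧ φ ω = o)
    (hres : IsKnownResidue i j k (v.map φ)) (hnorm : v.w = 1 ∨ φ v.w = 0 ∧ v.x = 1)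
    (hv : v.w * v.x * v.y * v.z ≠ 0) : v.IsExceptional := by
  obtain ⟨hw, hz, hxy, hx3⟩ | ⟨⟨_, _, _, e⟩, he, ⟨⟩, hve⟩ | ⟨rfl, rfl, rfl, hv1⟩ := hres
  · exact Or.inl (h.onInvariantLine_of_map hF hω hw hz hxy hx3)
  · obtain rfl := h.eq_of_mem_solutions hF.char_ne hF' he hve hnorm
    simp only [Signature.map, ← map_mul] at hv
    obtain rfl | rfl := eq_of_mem_solutions_of_mul_ne_zero _ he (ne_zero_of_map hv)
    · exact Or.inr (Or.inl (by simp [Signature.map]))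
    · exact Or.inr (Or.inr (by simp [Signature.map]))
  · exact absurd h (not_solves_five_of_map_eq_identity hF.char_ne hv1
      (right_ne_zero_of_mul (left_ne_zero_of_mul (left_ne_zero_of_mul hv)))
      (right_ne_zero_of_mul (left_ne_zero_of_mul hv)))

end Local

section Global

variable {i j k : FailureType}

theorem prime_and_not_dvd_of_mem_primes :
    ∀ l ∈ primes, l.Prime ∧ ¬l ∣ 210 ∧ ¬l ∣ 17 := by
  norm_num [primes]

theorem Solves.isExceptional_of_check {l : ℕ} [Fact l.Prime] (h210 : (210 : ZMod l) ≠ 0)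
    (h17 : (17 : ZMod l) ≠ 0) (hi0 : i ≠ 0) (hi6 : i ≠ 6) (hij : ¬(i = 1 ∧ j = 1))
    (hl : check l i j k = true) {v : Signature ℤ_[l]} (h : v.Solves i j k)
    (hv : v.w * v.x * v.y * v.z ≠ 0) : v.IsExceptional := by
  obtain ⟨g, hg, u, rfl, hnorm⟩ := h.exists_eq_scale_normalized (φ := PadicInt.toZMod) h210 hi0 hi6
    (left_ne_zero_of_mul (left_ne_zero_of_mul (left_ne_zero_of_mul hv)))
  have hu := h.of_scale hg
  refine (isExceptional_scale_iff hg).2 <| hu.isExceptional_of_isKnownResidue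
    (φ := PadicInt.toZMod) (nondegenerate_of_check h210 hi0 hi6 hij hl) h17
    (fun o ho => exists_pow_three_eq_one_map_eq (ZMod.ringHom_surjective _)
      (ofNat_ne_zero h210 3) ho)
    (isKnownResidue_of_check hi0 hi6 hl (hu.map _) ?_) hnorm
    (by simpa [hg] using hv)
  exact hnorm.imp (by simp +contextual) (by simp +contextual)

theorem Solves.isExceptional_of_int (hi0 : i ≠ 0) (hi6 : i ≠ 6) (hij : ¬(i = 1 ∧ j = 1))
    {v : Signature ℤ} (h : v.Solves i j k) (hv : v.w * v.x * v.y * v.z ≠ 0) :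
    v.IsExceptional := by
  obtain ⟨l, hl, hcheck⟩ := exists_check i j k hi0 hi6 hij
  obtain ⟨hprime, h210, h17⟩ := prime_and_not_dvd_of_mem_primes l hl
  have : Fact l.Prime := ⟨hprime⟩
  have hinj : Function.Injective (Int.castRingHom ℤ_[l]) := Int.cast_injective
  rw [← ZMod.natCast_eq_zero_iff] at h210 h17
  exact (isExceptional_map_iff hinj).1 <| (h.map _).isExceptional_of_check h210 h17 hi0 hi6 hij
    hcheck (by simpa using hv)

theorem exists_scale_eq_map_int (v : Signature ℚ) :
    ∃ g ≠ 0, ∃ n : Signature ℤ, v.scale g = n.map (Int.castRingHom ℚ) := by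
  obtain ⟨⟨g, hg⟩, h⟩ := IsLocalization.exist_integer_multiples_of_finset
    (nonZeroDivisors ℤ) {v.w, v.x, v.y, v.z}
  simp only [Finset.mem_insert, Finset.mem_singleton, forall_eq_or_imp, forall_eq,
    IsLocalization.IsInteger, RingHom.mem_rangeS] at h
  obtain ⟨⟨w, hw⟩, ⟨x, hx⟩, ⟨y, hy⟩, ⟨z, hz⟩⟩ := h
  refine ⟨g, by simpa using nonZeroDivisors.ne_zero hg, ⟨w, x, y, z⟩, ?_⟩
  ext <;> simp_all

theorem Solves.isExceptional (hi0 : i ≠ 0) (hi6 : i ≠ 6) {v : Signature ℚ} (h : v.Solves i j k)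
    (hv : v.w * v.x * v.y * v.z ≠ 0) : v.IsExceptional := by
  by_cases hij : i = 1 ∧ j = 1
  · obtain ⟨rfl, rfl⟩ := hij
    exact Or.inl (h.onInvariantLine_of_one_one three_ne_zero)
  obtain ⟨g, hg, n, hn⟩ := v.exists_scale_eq_map_int
  have hinj : Function.Injective (Int.castRingHom ℚ) := Int.cast_injective
  have hsol : n.Solves i j k := .of_map hinj (hn ▸ h.scale g)
  have hn0 : (n.map (Int.castRingHom ℚ)).w * (n.map (Int.castRingHom ℚ)).x *
      (n.map (Int.castRingHom ℚ)).y * (n.map (Int.castRingHom ℚ)).z ≠ 0 := by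
    simpa [← hn, hg] using hv
  rw [← isExceptional_scale_iff hg, hn, isExceptional_map_iff hinj]
  exact hsol.isExceptional_of_int hi0 hi6 hij (by simpa using hn0)

theorem exists_failure_eq_zero_of_condR {a b c : ℚ} (h : condR a b c) :
    ∃ i : FailureType, i ≠ 0 ∧ i ≠ 6 ∧ (⟨1, a, b, c⟩ : Signature ℚ).failure i = 0 := by
  rcases h with h | h | h | h | h <;> [skip; use 2; use 3; use 4; use 5]
  · exact ⟨1, by decide, by decide, by simp [failure, traceCoeff, detCoeff, add_comm 1 c, h]⟩
  all_goals
    refine ⟨by decide, by decide, ?_⟩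
    simp only [failure, traceCoeff, detCoeff, Matrix.cons_val, Fin.isValue, Fin.reduceEq,
      ↓reduceIte]
    push_cast
    linear_combination h

theorem exists_failure_eq_zero_of_condT {w x y z : ℚ} (h : condT w x y z) :
    ∃ j, (⟨w, x, y, z⟩ : Signature ℚ).failure j = 0 := by
  rcases h with h | h | h | h | h | h <;> [skip; use 2; use 3; use 4; use 5; use 6]
  · obtain hw | hwz := mul_eq_zero.1 (show w * (w + z) = 0 by linear_combination h)
    · exact ⟨0, hw⟩
    · exact ⟨1, by simp [failure, traceCoeff, detCoeff, hwz]⟩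
  all_goals
    simp only [failure, traceCoeff, detCoeff, Matrix.cons_val, Fin.isValue, Fin.reduceEq,
      ↓reduceIte]
    push_cast
    linear_combination h

theorem IsExceptional.eq_or_eq_or_eq {a b c : ℚ}
    (h : (⟨1, a, b, c⟩ : Signature ℚ).IsExceptional) :
    (a, b, c) = (-1, 1, 1) ∨ (a, b, c) = (1, -1, 1) ∨ (b = -a ∧ c = -1) := by
  obtain ⟨hc, hab⟩ | ⟨ha, hb, hc⟩ | ⟨ha, hb, hc⟩ := h
  · have hab3 : b ^ 3 = (-a) ^ 3 := by linear_combination hab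
    exact Or.inr (Or.inr ⟨(Odd.strictMono_pow (by decide : Odd 3)).injective hab3,
      by linear_combination hc⟩)
  · exact Or.inl (Prod.ext ha (Prod.ext hb hc))
  · exact Or.inr (Or.inl (Prod.ext ha (Prod.ext hb hc)))

end Global

end Signature

end TernaryGadget

open TernaryGadget Signature in
theorem stmt_18 (a b c : ℚ) (habc : a * b * c ≠ 0)
    (hR : condR a b c)
    (hT : condT (Ghat (1, a, b, c)).1 (Ghat (1, a, b, c)).2.1
      (Ghat (1, a, b, c)).2.2.1 (Ghat (1, a, b, c)).2.2.2)
    (hT2 : condT (Ghat (Ghat (1, a, b, c))).1 (Ghat (Ghat (1, a, b, c))).2.1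
      (Ghat (Ghat (1, a, b, c))).2.2.1 (Ghat (Ghat (1, a, b, c))).2.2.2) :
    (a, b, c) = (-1, 1, 1) ∨ (a, b, c) = (1, -1, 1) ∨ (b = -a ∧ c = -1) := by
  obtain ⟨i, hi0, hi6, hi⟩ := exists_failure_eq_zero_of_condR hR
  obtain ⟨j, hj⟩ := exists_failure_eq_zero_of_condT hT
  obtain ⟨k, hk⟩ := exists_failure_eq_zero_of_condT hT2
  have hsol : (⟨1, a, b, c⟩ : Signature ℚ).Solves i j k := ⟨hi, hj, hk⟩
  exact (hsol.isExceptional hi0 hi6 (by simpa using habc)).eq_or_eq_or_eq
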